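/- Let R be a Noetherian ring, 𝔞 an ideal with dim R/𝔞 = 1, and M an R-module. If Ext^i_R(R/𝔞, M) is weakly Laskerian for all i ≤ cd(𝔞, M) + 1, then H^i_𝔞(M) is 𝔞-weakly cofinite for all i ≥ 0, and Ext^i_R(R/𝔞, M) is weakly Laskerian for all i ≥ 0. -/

import Mathlib

open CategoryTheory

universe u

variable (R : Type u) [CommRing R]

/-- The `i`-th Ext module `Ext^i_R(N, M)` of `R`-modules. -/
noncomputable def extModule (i : ℕ) (N M : ModuleCat.{u} R) : ModuleCat.{u} R :=
  ((Ext R (ModuleCat.{u} R) i).obj (Opposite.op N)).obj M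

/-- A module is weakly Laskerian if every quotient has finitely many associated primes. -/
def IsWeaklyLaskerian (M : Type u) [AddCommGroup M] [Module R M] : Prop :=
  ∀ N : Submodule R M, (associatedPrimes R (M ⧸ N)).Finite

/-- `M` is `𝔞`-cofinite: `Supp M ⊆ V(𝔞)` and all `Ext^i_R(R/𝔞, M)` are finitely generated. -/
def IsCofinite (𝔞 : Ideal R) (M : ModuleCat.{u} R) : Prop :=
  Module.support R M ⊆ PrimeSpectrum.zeroLocus (𝔞 : Set R) ∧
    ∀ i : ℕ, Module.Finite R (extModule R i (ModuleCat.of R (R ⧸ 𝔞)) M)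

/-- `M` is `𝔞`-weakly cofinite: `Supp M ⊆ V(𝔞)` and all `Ext^i_R(R/𝔞, M)` are weakly
Laskerian. -/
def IsWeaklyCofinite (𝔞 : Ideal R) (M : ModuleCat.{u} R) : Prop :=
  Module.support R M ⊆ PrimeSpectrum.zeroLocus (𝔞 : Set R) ∧
    ∀ i : ℕ, IsWeaklyLaskerian R (extModule R i (ModuleCat.of R (R ⧸ 𝔞)) M)

/-- The Krull dimension of the support of a module. -/
noncomputable def suppDim (M : Type u) [AddCommGroup M] [Module R M] : WithBot ℕ∞ :=
  Order.krullDim (Module.support R M)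

/-- The cohomological dimension `cd(𝔞, M) = sup {i | H^i_𝔞(M) ≠ 0}`, as an element of `ℕ∞`. -/
noncomputable def cohomologicalDim (𝔞 : Ideal R) (M : ModuleCat.{u} R) : ℕ∞ :=
  ⨆ i ∈ {i : ℕ | Nontrivial ((localCohomology 𝔞 i).obj M)}, (i : ℕ∞)

/-- `p` is an attached prime of `M`: `p` is prime and is the annihilator of a quotient
of `M`. -/
def IsAttachedPrime (M : Type u) [AddCommGroup M] [Module R M] (p : Ideal R) : Prop :=
  p.IsPrime ∧ ∃ N : Submodule R M, p = Module.annihilator R (M ⧸ N)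


section OldExt
open CategoryTheory CategoryTheory.Limits Opposite

variable {R}
variable {X : ModuleCat.{u} R} (P : ProjectiveResolution X) (Y : ModuleCat.{u} R) (n : ℕ)

/-- The complex of which the (unop of the) homology computes old `Ext`. -/
noncomputable abbrev oeK : ChainComplex (ModuleCat.{u} R)ᵒᵖ ℕ :=
  ((((linearYoneda R (ModuleCat.{u} R)).obj Y).rightOp).mapHomologicalComplex _).obj P.complex

noncomputable abbrev oeC : ModuleCat.{u} R := unop ((oeK P Y).opcycles n)

noncomputable def oeI : oeC P Y n →ₗ[R] (P.complex.X n ⟶ Y) :=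
  ((oeK P Y).pOpcycles n).unop.hom

noncomputable abbrev oeF : ModuleCat.{u} R ⥤ (ModuleCat.{u} R)ᵒᵖ :=
  ((linearYoneda R (ModuleCat.{u} R)).obj Y).rightOp

noncomputable def oeIso : ((oeF Y).leftDerived n).obj X ≅ (oeK P Y).homology n :=
  P.isoLeftDerivedObj (oeF Y) n

noncomputable def oeQ : oeC P Y n ⟶ extModule R n X Y :=
  ((oeIso P Y n).hom ≫
    (oeK P Y).homologyι n).unop

lemma oeI_injective : Function.Injective (oeI P Y n) := by
  have : Mono ((oeK P Y).pOpcycles n).unop := inferInstance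
  exact (ModuleCat.mono_iff_injective _).1 this

lemma oeQ_surjective : Function.Surjective (oeQ P Y n) := by
  have : Mono ((oeIso P Y n).hom ≫
    (oeK P Y).homologyι n) := mono_comp _ _
  have : Epi (oeQ P Y n) := by
    unfold oeQ
    exact unop_epi_of_mono _
  exact (ModuleCat.epi_iff_surjective _).1 this

lemma oeI_cocycle (z : oeC P Y n) (m : ℕ) : P.complex.d m n ≫ oeI P Y n z = 0 := by
  have := congrArg (fun f => f.unop.hom z) ((oeK P Y).d_pOpcycles m n)
  exact this

lemma oeI_exists (f : P.complex.X n ⟶ Y) (hf : P.complex.d (n+1) n ≫ f = 0) :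
    ∃ z, oeI P Y n z = f := by
  have h : (ShortComplex.mk ((oeK P Y).d (n+1) n) ((oeK P Y).pOpcycles n)
      ((oeK P Y).d_pOpcycles _ _)).Exact :=
    ShortComplex.exact_of_g_is_cokernel _ ((oeK P Y).opcyclesIsCokernel (n+1) n (by simp))
  have h2 := h.unop
  rw [ShortComplex.moduleCat_exact_iff] at h2
  exact h2 f hf

lemma oeQ_zero_iff (z : oeC P Y (n+1)) : oeQ P Y (n+1) z = 0 ↔
    ∃ g : P.complex.X n ⟶ Y, P.complex.d (n+1) n ≫ g = oeI P Y (n+1) z := by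
  have h : (ShortComplex.mk ((oeK P Y).homologyι (n+1)) ((oeK P Y).fromOpcycles (n+1) n) (by simp)).Exact :=
    ShortComplex.exact_of_f_is_kernel _ ((oeK P Y).homologyIsKernel (n+1) n (by simp))
  have h2 := h.unop
  rw [ShortComplex.moduleCat_exact_iff] at h2
  have h3 : ∀ g : P.complex.X n ⟶ Y, oeI P Y (n+1) (((oeK P Y).fromOpcycles (n+1) n).unop.hom g) =
      P.complex.d (n+1) n ≫ g := fun g => 
    congrArg (fun f => f.unop.hom g) ((oeK P Y).p_fromOpcycles (n+1) n)
  have h4 : oeQ P Y (n+1) z = 0 ↔ ((oeK P Y).homologyι (n+1)).unop.hom z = 0 := by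
    have : Mono ((oeIso P Y (n+1)).hom.unop) := inferInstance
    exact ((injective_iff_map_eq_zero' _).1 ((ModuleCat.mono_iff_injective _).1 this)) _
  rw [h4]
  constructor
  · intro hz
    obtain ⟨g, hg⟩ := h2 z hz
    refine ⟨g, ?_⟩
    exact (h3 g).symm.trans (congrArg (oeI P Y (n+1)) hg)
  · rintro ⟨g, hg⟩
    rw [← h3] at hg
    have := oeI_injective P Y (n+1) hg
    rw [← this]
    exact congrArg (fun f => f.unop.hom g) ((oeK P Y).homologyι_comp_fromOpcycles (n+1) n)

lemma oeQ_zero_iff0 (z : oeC P Y 0) : oeQ P Y 0 z = 0 ↔ oeI P Y 0 z = 0 := by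
  have h4 : oeQ P Y 0 z = 0 ↔ ((oeK P Y).homologyι 0).unop.hom z = 0 := by
    have : Mono ((oeIso P Y 0).hom.unop) := inferInstance
    exact ((injective_iff_map_eq_zero' _).1 ((ModuleCat.mono_iff_injective _).1 this)) _
  rw [h4]
  have : IsIso ((oeK P Y).homologyι 0) := (oeK P Y).isIso_homologyι 0 0 (by simp) (by simp)
  have h5 : Mono ((oeK P Y).homologyι 0).unop := inferInstance
  have h6 := ((injective_iff_map_eq_zero' _).1 ((ModuleCat.mono_iff_injective _).1 h5)) z
  have h7 := ((injective_iff_map_eq_zero' _).1 (oeI_injective P Y 0)) z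
  exact h6.trans h7.symm

lemma oe_nat {X' : ModuleCat.{u} R} (P' : ProjectiveResolution X') (g : X' ⟶ X)
    (φ : ProjectiveResolution.Hom P' P g) (z : oeC P Y n) :
    ∃ z' : oeC P' Y n, oeI P' Y n z' = φ.hom.f n ≫ oeI P Y n z ∧
      oeQ P' Y n z' = (((Ext R (ModuleCat.{u} R) n).map g.op).app Y).hom (oeQ P Y n z) := by
  let ψ : oeK P' Y ⟶ oeK P Y :=
    ((((linearYoneda R (ModuleCat.{u} R)).obj Y).rightOp).mapHomologicalComplex _).map φ.hom
  refine ⟨(HomologicalComplex.opcyclesMap ψ n).unop.hom z, ?_, ?_⟩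
  · exact congrArg (fun f => f.unop.hom z) (HomologicalComplex.p_opcyclesMap ψ n)
  · have h1 := ProjectiveResolution.isoLeftDerivedObj_hom_naturality g P' P φ.hom
      (by simpa using φ.hom_f_zero_comp_π_f_zero) ((linearYoneda R (ModuleCat.{u} R)).obj Y).rightOp n
    have h2 := HomologicalComplex.homologyι_naturality ψ n
    have h1' : ((oeF Y).leftDerived n).map g ≫ (oeIso P Y n).hom = (oeIso P' Y n).hom ≫
        HomologicalComplex.homologyMap ψ n := h1
    have h3 : ((((linearYoneda R (ModuleCat.{u} R)).obj Y).rightOp).leftDerived n).map g ≫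
        (oeIso P Y n).hom ≫
          (oeK P Y).homologyι n =
        ((oeIso P' Y n).hom ≫
    (oeK P' Y).homologyι n) ≫ HomologicalComplex.opcyclesMap ψ n := by
      rw [← Category.assoc, h1', Category.assoc, Category.assoc, h2]
    exact (congrArg (fun f => f.unop.hom z) h3).symm

end OldExt


section Compare
open CategoryTheory CategoryTheory.Limits Opposite

variable {R}

lemma proj_extMk_eq_zero_iff0 {X Y : ModuleCat.{u} R} (P : ProjectiveResolution X)
    (f : P.complex.X 0 ⟶ Y) (hf : P.complex.d 1 0 ≫ f = 0) :
    (P.extMk f 1 rfl hf : Abelian.Ext.{u} X Y 0) = 0 ↔ f = 0 := by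
  constructor
  · intro h
    simp only [← P.extEquivCohomologyClass.apply_eq_iff_eq,
      ProjectiveResolution.extEquivCohomologyClass_extMk,
      ProjectiveResolution.extEquivCohomologyClass_zero,
      CochainComplex.HomComplex.CohomologyClass.mk_eq_zero_iff] at h
    rw [CochainComplex.HomComplex.Cocycle.toSingleMk_mem_coboundaries_iff _ _ _ _ _ 1 (by simp)] at h
    obtain ⟨g, hg⟩ := h
    have hz : IsZero (P.cochainComplex.X 1) := P.cochainComplex.isZero_of_isStrictlyLE 0 1 (by lia)
    rw [hz.eq_of_src g 0, comp_zero] at hg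
    rw [← cancel_epi (P.cochainComplexXIso (-(0:ℕ)) 0 rfl).hom, comp_zero]
    exact hg.symm
  · rintro rfl
    exact ProjectiveResolution.extMk_zero _ _ _

lemma inj_extMk_eq_zero_iff0 {X Y : ModuleCat.{u} R} (I : InjectiveResolution Y)
    (f : X ⟶ I.cocomplex.X 0) (hf : f ≫ I.cocomplex.d 0 1 = 0) :
    (I.extMk f 1 rfl hf : Abelian.Ext.{u} X Y 0) = 0 ↔ f = 0 := by
  constructor
  · intro h
    simp only [← I.extEquivCohomologyClass.apply_eq_iff_eq,
      InjectiveResolution.extEquivCohomologyClass_extMk,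
      InjectiveResolution.extEquivCohomologyClass_zero,
      CochainComplex.HomComplex.CohomologyClass.mk_eq_zero_iff] at h
    rw [CochainComplex.HomComplex.Cocycle.fromSingleMk_mem_coboundaries_iff _ _ _ _ _ (-1) (by simp)] at h
    obtain ⟨g, hg⟩ := h
    have hz : IsZero (I.cochainComplex.X (-1)) :=
      I.cochainComplex.isZero_of_isStrictlyGE 0 (-1) (by lia)
    rw [hz.eq_of_tgt g 0, zero_comp] at hg
    rw [← cancel_mono (I.cochainComplexXIso (0:ℕ) 0 rfl).inv, zero_comp]
    exact hg.symm
  · rintro rfl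
    exact InjectiveResolution.extMk_zero _ _ _

lemma proj_smul_extMk {X Y : ModuleCat.{u} R} (P : ProjectiveResolution X) {n : ℕ} (r : R)
    (f : P.complex.X n ⟶ Y) (m : ℕ) (hm : n + 1 = m) (hf : P.complex.d m n ≫ f = 0) :
    (P.extMk (r • f) m hm (by simp [hf]) : Abelian.Ext.{u} X Y n) = r • P.extMk f m hm hf := by
  rw [Abelian.Ext.smul_eq_comp_mk₀, ProjectiveResolution.extMk_comp_mk₀]
  simp

lemma inj_smul_extMk {X Y : ModuleCat.{u} R} (I : InjectiveResolution Y) {n : ℕ} (r : R)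
    (f : X ⟶ I.cocomplex.X n) (m : ℕ) (hm : n + 1 = m) (hf : f ≫ I.cocomplex.d n m = 0) :
    (I.extMk (r • f) m hm (by simp [hf]) : Abelian.Ext.{u} X Y n) = r • I.extMk f m hm hf := by
  have h : r • (I.extMk f m hm hf : Abelian.Ext.{u} X Y n) =
      (Abelian.Ext.mk₀ (r • 𝟙 X)).comp (I.extMk f m hm hf) (zero_add _) := by
    rw [Abelian.Ext.mk₀_smul]; simp
  rw [h, InjectiveResolution.mk₀_comp_extMk]
  congr 1
  simp

noncomputable def neQ {X : ModuleCat.{u} R} (P : ProjectiveResolution X) (Y : ModuleCat.{u} R)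
    (n : ℕ) : oeC P Y n →ₗ[R] Abelian.Ext.{u} X Y n where
  toFun z := P.extMk (oeI P Y n z) (n+1) rfl (oeI_cocycle P Y n z _)
  map_add' a b := by
    rw [ProjectiveResolution.add_extMk]; congr 1; simp
  map_smul' r a := by
    rw [RingHom.id_apply, ← proj_smul_extMk]; congr 1; simp

lemma neQ_surjective {X : ModuleCat.{u} R} (P : ProjectiveResolution X) (Y : ModuleCat.{u} R)
    (n : ℕ) : Function.Surjective (neQ P Y n) := by
  intro α
  obtain ⟨f, hf, rfl⟩ := P.extMk_surjective α (n+1) rfl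
  obtain ⟨z, rfl⟩ := oeI_exists P Y n f hf
  exact ⟨z, rfl⟩

lemma neQ_ker {X : ModuleCat.{u} R} (P : ProjectiveResolution X) (Y : ModuleCat.{u} R)
    (n : ℕ) (z : oeC P Y n) : neQ P Y n z = 0 ↔ oeQ P Y n z = 0 := by
  cases n with
  | zero => exact (proj_extMk_eq_zero_iff0 P _ (oeI_cocycle P Y 0 z 1)).trans (oeQ_zero_iff0 P Y z).symm
  | succ n => exact (P.extMk_eq_zero_iff _ _ rfl (oeI_cocycle P Y (n+1) z _) n rfl).trans (oeQ_zero_iff P Y n z).symm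

noncomputable def cmpP {X : ModuleCat.{u} R} (P : ProjectiveResolution X) (Y : ModuleCat.{u} R)
    (n : ℕ) : extModule R n X Y ≃ₗ[R] Abelian.Ext.{u} X Y n :=
  ((oeQ P Y n).hom.quotKerEquivOfSurjective (oeQ_surjective P Y n)).symm ≪≫ₗ
    (Submodule.quotEquivOfEq _ _ (by
      ext z; exact (neQ_ker P Y n z).symm)) ≪≫ₗ
    (neQ P Y n).quotKerEquivOfSurjective (neQ_surjective P Y n)

lemma cmpP_apply {X : ModuleCat.{u} R} (P : ProjectiveResolution X) (Y : ModuleCat.{u} R)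
    (n : ℕ) (z : oeC P Y n) : cmpP P Y n (oeQ P Y n z) = neQ P Y n z := by
  have : ((oeQ P Y n).hom.quotKerEquivOfSurjective (oeQ_surjective P Y n)).symm (oeQ P Y n z) =
    Submodule.Quotient.mk z := by
    rw [LinearEquiv.symm_apply_eq]; rfl
  simp only [cmpP, LinearEquiv.trans_apply, this]
  rfl

noncomputable def extCmp (n : ℕ) (X Y : ModuleCat.{u} R) :
    extModule R n X Y ≃ₗ[R] Abelian.Ext.{u} X Y n := cmpP (projectiveResolution X) Y n

lemma extCmp_nat (n : ℕ) {X X' : ModuleCat.{u} R} (g : X' ⟶ X) (Y : ModuleCat.{u} R)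
    (e : extModule R n X Y) :
    extCmp n X' Y ((((Ext R (ModuleCat.{u} R) n).map g.op).app Y).hom e) =
      (Abelian.Ext.mk₀ g).comp (extCmp n X Y e) (zero_add _) := by
  obtain ⟨z, rfl⟩ := oeQ_surjective (projectiveResolution X) Y n e
  let φ : ProjectiveResolution.Hom (projectiveResolution X') (projectiveResolution X) g :=
    ⟨ProjectiveResolution.lift g _ _, by
      have := ProjectiveResolution.lift_commutes_zero g (projectiveResolution X')
        (projectiveResolution X)
      simpa using this⟩
  obtain ⟨z', h1, h2⟩ := oe_nat (projectiveResolution X) Y n (projectiveResolution X') g φ z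
  rw [← h2]
  unfold extCmp
  rw [cmpP_apply, cmpP_apply]
  have := ProjectiveResolution.mk₀_comp_extMk (oeI (projectiveResolution X) Y n z) (n+1) rfl
    (oeI_cocycle _ Y n z _) φ
  refine Eq.trans ?_ this.symm
  change ProjectiveResolution.extMk _ _ _ rfl (oeI_cocycle _ Y n z' _) = _
  congr 1

end Compare

section Torsion
open CategoryTheory CategoryTheory.Limits Opposite
variable {R}

/-- Elements killed by `𝔟`. -/
def annSub (𝔟 : Ideal R) (Y : Type u) [AddCommGroup Y] [Module R Y] : Submodule R Y where
  carrier := {y | ∀ a ∈ 𝔟, a • y = 0}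
  add_mem' {x y} hx hy a ha := by rw [smul_add, hx a ha, hy a ha, add_zero]
  zero_mem' a _ := smul_zero a
  smul_mem' r y hy a ha := by rw [smul_comm, hy a ha, smul_zero]

lemma mem_annSub {𝔟 : Ideal R} {Y : Type u} [AddCommGroup Y] [Module R Y] {y : Y} :
    y ∈ annSub 𝔟 Y ↔ ∀ a ∈ 𝔟, a • y = 0 := Iff.rfl

lemma annSub_anti {𝔟 𝔠 : Ideal R} (h : 𝔟 ≤ 𝔠) (Y : Type u) [AddCommGroup Y] [Module R Y] :
    annSub 𝔠 Y ≤ annSub 𝔟 Y := fun _ hy a ha => hy a (h ha)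

/-- The `𝔞`-torsion submodule. -/
def torSub (𝔞 : Ideal R) (Y : Type u) [AddCommGroup Y] [Module R Y] : Submodule R Y where
  carrier := {y | ∃ t : ℕ, y ∈ annSub (𝔞 ^ t) Y}
  add_mem' := by
    rintro x y ⟨s, hs⟩ ⟨t, ht⟩
    exact ⟨max s t, add_mem (annSub_anti (Ideal.pow_le_pow_right (le_max_left _ _)) _ hs)
      (annSub_anti (Ideal.pow_le_pow_right (le_max_right _ _)) _ ht)⟩
  zero_mem' := ⟨0, zero_mem _⟩
  smul_mem' := by
    rintro r y ⟨t, ht⟩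
    exact ⟨t, Submodule.smul_mem _ _ ht⟩

lemma mem_torSub {𝔞 : Ideal R} {Y : Type u} [AddCommGroup Y] [Module R Y] {y : Y} :
    y ∈ torSub 𝔞 Y ↔ ∃ t : ℕ, y ∈ annSub (𝔞 ^ t) Y := Iff.rfl

/-- The map `R/𝔟 → Y` attached to an element killed by `𝔟`. -/
noncomputable def qHom (𝔟 : Ideal R) (Y : ModuleCat.{u} R) (y : Y) (hy : y ∈ annSub 𝔟 Y) :
    ModuleCat.of R (R ⧸ 𝔟) ⟶ Y :=
  ModuleCat.ofHom (Submodule.liftQ 𝔟 (LinearMap.toSpanSingleton R Y y) (fun a ha => hy a ha))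

lemma qHom_mk (𝔟 : Ideal R) (Y : ModuleCat.{u} R) (y : Y) (hy : y ∈ annSub 𝔟 Y) (r : R) :
    (qHom 𝔟 Y y hy).hom (Submodule.Quotient.mk r) = r • y := rfl

lemma qHom_ext {𝔟 : Ideal R} {Y : ModuleCat.{u} R} {f g : ModuleCat.of R (R ⧸ 𝔟) ⟶ Y}
    (h : f.hom (Submodule.Quotient.mk 1) = g.hom (Submodule.Quotient.mk 1)) : f = g := by
  apply ModuleCat.hom_ext
  apply Submodule.linearMap_qext
  apply LinearMap.ext_ring
  exact h

lemma qHom_surj {𝔟 : Ideal R} {Y : ModuleCat.{u} R} (f : ModuleCat.of R (R ⧸ 𝔟) ⟶ Y) :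
    ∃ y hy, qHom 𝔟 Y y hy = f := by
  refine ⟨f.hom (Submodule.Quotient.mk 1), mem_annSub.2 fun a ha => ?_,
    qHom_ext ((qHom_mk _ _ _ _ _).trans (one_smul _ _))⟩
  rw [← map_smul, ← Submodule.Quotient.mk_smul, smul_eq_mul, mul_one,
    (Submodule.Quotient.mk_eq_zero _).2 ha, map_zero]

variable {M : ModuleCat.{u} R} (I : InjectiveResolution M)

noncomputable def dI (i : ℕ) : I.cocomplex.X i →ₗ[R] I.cocomplex.X (i+1) :=
  (I.cocomplex.d i (i+1)).hom

lemma dI_dI (i : ℕ) (y) : dI I (i+1) (dI I i y) = 0 :=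
  congrArg (fun f => f.hom y) (I.cocomplex.d_comp_d i (i+1) (i+2))

lemma qHom_d {𝔟 : Ideal R} {i : ℕ} {y : I.cocomplex.X i} (hd : dI I i y = 0)
    (hy : y ∈ annSub 𝔟 _) : qHom 𝔟 _ y hy ≫ I.cocomplex.d i (i+1) = 0 := by
  apply qHom_ext
  change dI I i ((qHom 𝔟 _ y hy).hom _) = 0
  rw [qHom_mk, one_smul, hd]

noncomputable def xiM (𝔟 : Ideal R) (i : ℕ) :
    ↥(LinearMap.ker (dI I i) ⊓ annSub 𝔟 (I.cocomplex.X i)) →ₗ[R]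
      Abelian.Ext.{u} (ModuleCat.of R (R ⧸ 𝔟)) M i where
  toFun y := I.extMk (qHom 𝔟 _ y.1 y.2.2) (i+1) rfl (qHom_d I y.2.1 y.2.2)
  map_add' x y := by
    rw [InjectiveResolution.add_extMk]
    congr 1
    apply qHom_ext
    change (qHom _ _ _ (x + y).2.2).hom _ = (qHom _ _ _ x.2.2).hom _ + (qHom _ _ _ y.2.2).hom _
    rw [qHom_mk, qHom_mk, qHom_mk, one_smul, one_smul, one_smul]; rfl
  map_smul' r y := by
    rw [RingHom.id_apply, ← inj_smul_extMk]
    congr 1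
    apply qHom_ext
    change (qHom _ _ _ (r • y).2.2).hom _ = r • (qHom _ _ _ y.2.2).hom _
    rw [qHom_mk, qHom_mk, one_smul, one_smul]; rfl

lemma xiM_surjective (𝔟 : Ideal R) (i : ℕ) : Function.Surjective (xiM I 𝔟 i) := by
  intro α
  obtain ⟨f, hf, rfl⟩ := I.extMk_surjective α (i+1) rfl
  obtain ⟨y, hy, rfl⟩ := qHom_surj f
  refine ⟨⟨y, ?_, hy⟩, rfl⟩
  have := congrArg (fun f => f.hom (Submodule.Quotient.mk 1)) hf
  change dI I i ((qHom 𝔟 _ y hy).hom _) = 0 at this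
  rwa [qHom_mk, one_smul] at this

lemma xiM_zero_iff0 (𝔟 : Ideal R) (y) : xiM I 𝔟 0 y = 0 ↔ y.1 = 0 := by
  refine (inj_extMk_eq_zero_iff0 I _ (qHom_d I y.2.1 y.2.2)).trans ⟨fun h => ?_, fun h => ?_⟩
  · have := congrArg (fun f => f.hom (Submodule.Quotient.mk 1)) h
    dsimp only at this
    rwa [qHom_mk, one_smul] at this
  · apply qHom_ext
    rw [qHom_mk, h, smul_zero]; rfl

lemma xiM_zero_iff (𝔟 : Ideal R) (i : ℕ) (y) : xiM I 𝔟 (i+1) y = 0 ↔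
    ∃ w ∈ annSub 𝔟 (I.cocomplex.X i), dI I i w = y.1 := by
  refine (I.extMk_eq_zero_iff _ _ rfl (qHom_d I y.2.1 y.2.2) i rfl).trans
    ⟨fun ⟨g, hg⟩ => ?_, fun ⟨w, hw, h⟩ => ?_⟩
  · obtain ⟨w, hw, rfl⟩ := qHom_surj g
    refine ⟨w, hw, ?_⟩
    have := congrArg (fun f => f.hom (Submodule.Quotient.mk 1)) hg
    change dI I i ((qHom 𝔟 _ w hw).hom _) = (qHom _ _ _ _).hom _ at this
    rwa [qHom_mk, one_smul, qHom_mk, one_smul] at this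
  · refine ⟨qHom 𝔟 _ w hw, qHom_ext ?_⟩
    change dI I i ((qHom 𝔟 _ w hw).hom _) = _
    rw [qHom_mk, one_smul, qHom_mk, one_smul, h]

lemma xiM_nat {𝔟 𝔠 : Ideal R} (i : ℕ) (y)
    (y' : ↥(LinearMap.ker (dI I i) ⊓ annSub 𝔟 (I.cocomplex.X i))) (hyy : y'.1 = y.1)
    (g : ModuleCat.of R (R ⧸ 𝔟) ⟶ ModuleCat.of R (R ⧸ 𝔠))
    (hg : g.hom (Submodule.Quotient.mk 1) = Submodule.Quotient.mk 1) :
    (Abelian.Ext.mk₀ g).comp (xiM I 𝔠 i y) (zero_add _) = xiM I 𝔟 i y' := by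
  refine (I.mk₀_comp_extMk _ _ rfl (qHom_d I y.2.1 y.2.2) g).trans ?_
  change _ = I.extMk _ _ rfl (qHom_d I y'.2.1 y'.2.2)
  congr 1
  apply qHom_ext
  change (qHom _ _ _ y.2.2).hom (g.hom _) = _
  rw [hg, qHom_mk, qHom_mk, hyy]

end Torsion

section LocCoh
open CategoryTheory CategoryTheory.Limits Opposite localCohomology
variable {R}

noncomputable def lcI (𝔞 : Ideal R) (i : ℕ) (M : ModuleCat.{u} R) (t : ℕ) :
    extModule R i (ModuleCat.of R (R ⧸ 𝔞 ^ t)) M ⟶ (localCohomology 𝔞 i).obj M :=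
  (colimit.ι (diagram (idealPowersDiagram 𝔞) i) (op (op t))).app M

noncomputable def lcQ (𝔞 : Ideal R) {s t : ℕ} (h : t ≤ s) :
    ModuleCat.of R (R ⧸ 𝔞 ^ s) ⟶ ModuleCat.of R (R ⧸ 𝔞 ^ t) :=
  ModuleCat.ofHom <| Submodule.mapQ _ _ LinearMap.id (Ideal.pow_le_pow_right h)

noncomputable def lcDiag (𝔞 : Ideal R) (i : ℕ) (M : ModuleCat.{u} R) :
    ℕᵒᵖᵒᵖ ⥤ ModuleCat.{u} R := diagram (idealPowersDiagram 𝔞) i ⋙ (evaluation _ _).obj M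

noncomputable def lcCocone (𝔞 : Ideal R) (i : ℕ) (M : ModuleCat.{u} R) :
    Cocone (lcDiag 𝔞 i M) :=
  ((evaluation _ _).obj M).mapCocone (colimit.cocone (diagram (idealPowersDiagram 𝔞) i))

noncomputable def lcIsColimit (𝔞 : Ideal R) (i : ℕ) (M : ModuleCat.{u} R) :
    IsColimit (lcCocone 𝔞 i M) :=
  isColimitOfPreserves _ (colimit.isColimit _)

lemma lc_preserves : PreservesFilteredColimitsOfSize.{0, 0} (forget (ModuleCat.{u} R)) :=
  preservesFilteredColimitsOfSize_shrink.{0, u, 0, u} _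

lemma lcI_surj (𝔞 : Ideal R) (i : ℕ) (M : ModuleCat.{u} R) (z : (localCohomology 𝔞 i).obj M) :
    ∃ t e, (lcI 𝔞 i M t).hom e = z := by
  have := lc_preserves (R := R)
  obtain ⟨j, e, h⟩ := Concrete.isColimit_exists_rep (lcDiag 𝔞 i M) (lcIsColimit 𝔞 i M) z
  exact ⟨j.unop.unop, e, h⟩

lemma lcI_zero (𝔞 : Ideal R) (i : ℕ) (M : ModuleCat.{u} R) (t : ℕ) (e)
    (h : (lcI 𝔞 i M t).hom e = 0) : ∃ s, ∃ hs : t ≤ s,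
    (((Ext R (ModuleCat.{u} R) i).map (lcQ 𝔞 hs).op).app M).hom e = 0 := by
  have := lc_preserves (R := R)
  have h0 : (lcI 𝔞 i M t).hom e = (lcI 𝔞 i M t).hom 0 := by rw [h, map_zero]
  have := (Concrete.isColimit_rep_eq_iff_exists (lcDiag 𝔞 i M) (lcIsColimit 𝔞 i M)
    (i := op (op t)) (j := op (op t)) e 0).1 h0
  obtain ⟨k, f, g, hk⟩ := this
  refine ⟨k.unop.unop, f.unop.unop.down.down, ?_⟩
  have h2 : ((lcDiag 𝔞 i M).map g).hom 0 = 0 := map_zero _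
  exact hk.trans h2

lemma lcI_nat (𝔞 : Ideal R) (i : ℕ) (M : ModuleCat.{u} R) {s t : ℕ} (hs : t ≤ s) (e) :
    (lcI 𝔞 i M s).hom ((((Ext R (ModuleCat.{u} R) i).map (lcQ 𝔞 hs).op).app M).hom e) =
    (lcI 𝔞 i M t).hom e := by
  have := (lcCocone 𝔞 i M).w (j := op (op s)) (j' := op (op t)) (homOfLE hs).op.op
  exact congrArg (fun f => f.hom e) this

variable {M : ModuleCat.{u} R} (I : InjectiveResolution M)

/-- the class in local cohomology of an element killed by `𝔞 ^ t`. -/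
noncomputable def lcCl (𝔞 : Ideal R) (i t : ℕ) :
    ↥(LinearMap.ker (dI I i) ⊓ annSub (𝔞 ^ t) (I.cocomplex.X i)) →ₗ[R]
      (localCohomology 𝔞 i).obj M :=
  (lcI 𝔞 i M t).hom ∘ₗ (extCmp i _ M).symm.toLinearMap ∘ₗ xiM I (𝔞 ^ t) i

lemma lcCl_nat (𝔞 : Ideal R) (i : ℕ) {s t : ℕ} (hs : t ≤ s) (y y')
    (hyy : y.1 = y'.1) : lcCl I 𝔞 i t y = lcCl I 𝔞 i s y' := by
  have h1 := xiM_nat I i y y' hyy.symm (lcQ 𝔞 hs) rfl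
  have h2 := extCmp_nat i (lcQ 𝔞 hs) M ((extCmp i _ M).symm (xiM I (𝔞 ^ t) i y))
  rw [LinearEquiv.apply_symm_apply, h1] at h2
  have h3 := lcI_nat 𝔞 i M hs ((extCmp i _ M).symm (xiM I (𝔞 ^ t) i y))
  refine h3.symm.trans ?_
  change _ = (lcI 𝔞 i M s).hom ((extCmp i _ M).symm (xiM I (𝔞 ^ s) i y'))
  congr 1
  rw [← h2]
  exact ((extCmp i _ M).symm_apply_apply _).symm

lemma lcCl_eq (𝔞 : Ideal R) (i : ℕ) (s t : ℕ) (y y')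
    (hyy : y.1 = y'.1) : lcCl I 𝔞 i t y = lcCl I 𝔞 i s y' := by
  rcases le_total s t with h | h
  · exact (lcCl_nat I 𝔞 i h y' y hyy.symm).symm
  · exact lcCl_nat I 𝔞 i h y y' hyy

lemma lcCl_surj (𝔞 : Ideal R) (i : ℕ) (z : (localCohomology 𝔞 i).obj M) :
    ∃ t y, lcCl I 𝔞 i t y = z := by
  obtain ⟨t, e, rfl⟩ := lcI_surj 𝔞 i M z
  obtain ⟨y, hy⟩ := xiM_surjective I (𝔞 ^ t) i (extCmp i _ M e)
  refine ⟨t, y, ?_⟩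
  change (lcI 𝔞 i M t).hom ((extCmp i _ M).symm (xiM I (𝔞 ^ t) i y)) = _
  rw [hy, LinearEquiv.symm_apply_apply]

lemma lcCl_zero (𝔞 : Ideal R) (i : ℕ) (t y) : lcCl I 𝔞 i t y = 0 ↔
    ∃ s, ∃ hs : t ≤ s, xiM I (𝔞 ^ s) i ⟨y.1, y.2.1,
      annSub_anti (Ideal.pow_le_pow_right hs) _ y.2.2⟩ = 0 := by
  constructor
  · intro h
    obtain ⟨s, hs, h1⟩ := lcI_zero 𝔞 i M t _ h
    refine ⟨s, hs, ?_⟩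
    rw [← xiM_nat I i y ⟨y.1, y.2.1,
      annSub_anti (Ideal.pow_le_pow_right hs) _ y.2.2⟩ rfl (lcQ 𝔞 hs) rfl]
    have h2 := extCmp_nat i (lcQ 𝔞 hs) M ((extCmp i _ M).symm (xiM I (𝔞 ^ t) i y))
    rw [LinearEquiv.apply_symm_apply] at h2
    refine h2.symm.trans ?_
    have h3 := congrArg (extCmp i (ModuleCat.of R (R ⧸ 𝔞 ^ s)) M) h1
    exact h3.trans (map_zero _)
  · rintro ⟨s, hs, h⟩
    rw [lcCl_nat I 𝔞 i hs y ⟨y.1, y.2.1,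
      annSub_anti (Ideal.pow_le_pow_right hs) _ y.2.2⟩ rfl]
    change (lcI 𝔞 i M s).hom ((extCmp i _ M).symm (xiM I (𝔞 ^ s) i _)) = _
    rw [h, map_zero, map_zero]

noncomputable def lcFun (𝔞 : Ideal R) (i : ℕ)
    (y : ↥(LinearMap.ker (dI I i) ⊓ torSub 𝔞 (I.cocomplex.X i))) :
      (localCohomology 𝔞 i).obj M :=
  lcCl I 𝔞 i (Classical.choose (mem_torSub.1 (Submodule.mem_inf.1 y.2).2))
    ⟨y.1, Submodule.mem_inf.2 ⟨(Submodule.mem_inf.1 y.2).1,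
      Classical.choose_spec (mem_torSub.1 (Submodule.mem_inf.1 y.2).2)⟩⟩

lemma lcFun_eq (𝔞 : Ideal R) (i : ℕ) (y) (t : ℕ) (y') (h : y.1 = y'.1) :
    lcFun I 𝔞 i y = lcCl I 𝔞 i t y' := lcCl_eq I 𝔞 i _ _ _ _ h

/-- The map from torsion cocycles to local cohomology. -/
noncomputable def lcPi (𝔞 : Ideal R) (i : ℕ) :
    ↥(LinearMap.ker (dI I i) ⊓ torSub 𝔞 (I.cocomplex.X i)) →ₗ[R]
      (localCohomology 𝔞 i).obj M where
  toFun y := lcFun I 𝔞 i y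
  map_add' x y := by
    obtain ⟨s, hs⟩ := mem_torSub.1 (Submodule.mem_inf.1 x.2).2
    obtain ⟨t, ht⟩ := mem_torSub.1 (Submodule.mem_inf.1 y.2).2
    have hs' := annSub_anti (Ideal.pow_le_pow_right (le_max_left s t)) _ hs
    have ht' := annSub_anti (Ideal.pow_le_pow_right (le_max_right s t)) _ ht
    let x1 : ↥(LinearMap.ker (dI I i) ⊓ annSub (𝔞 ^ max s t) (I.cocomplex.X i)) :=
      ⟨x.1, Submodule.mem_inf.2 ⟨(Submodule.mem_inf.1 x.2).1, hs'⟩⟩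
    let y1 : ↥(LinearMap.ker (dI I i) ⊓ annSub (𝔞 ^ max s t) (I.cocomplex.X i)) :=
      ⟨y.1, Submodule.mem_inf.2 ⟨(Submodule.mem_inf.1 y.2).1, ht'⟩⟩
    rw [lcFun_eq I 𝔞 i x (max s t) x1 rfl,
      lcFun_eq I 𝔞 i y (max s t) y1 rfl, lcFun_eq I 𝔞 i (x + y) (max s t) (x1 + y1) rfl,
      map_add]
  map_smul' r y := by
    obtain ⟨t, ht⟩ := mem_torSub.1 (Submodule.mem_inf.1 y.2).2
    let y1 : ↥(LinearMap.ker (dI I i) ⊓ annSub (𝔞 ^ t) (I.cocomplex.X i)) :=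
      ⟨y.1, Submodule.mem_inf.2 ⟨(Submodule.mem_inf.1 y.2).1, ht⟩⟩
    rw [RingHom.id_apply, lcFun_eq I 𝔞 i y t y1 rfl,
      lcFun_eq I 𝔞 i (r • y) t (r • y1) rfl, map_smul]

lemma lcPi_eq (𝔞 : Ideal R) (i : ℕ) (t : ℕ) (y) (y') (h : y.1 = y'.1) :
    lcPi I 𝔞 i y = lcCl I 𝔞 i t y' := lcCl_eq I 𝔞 i _ _ _ _ h

lemma lcPi_surjective (𝔞 : Ideal R) (i : ℕ) : Function.Surjective (lcPi I 𝔞 i) := by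
  intro z
  obtain ⟨t, y, rfl⟩ := lcCl_surj I 𝔞 i z
  exact ⟨⟨y.1, y.2.1, t, y.2.2⟩, lcPi_eq I 𝔞 i t _ _ rfl⟩

lemma lcPi_zero0 (𝔞 : Ideal R) (y) : lcPi I 𝔞 0 y = 0 ↔ y.1 = 0 := by
  refine (lcCl_zero I 𝔞 0 _ _).trans ⟨?_, fun h => ⟨_, le_rfl, ?_⟩⟩
  · rintro ⟨s, hs, h⟩
    exact (xiM_zero_iff0 I _ _).1 h
  · exact (xiM_zero_iff0 I _ _).2 h

lemma lcPi_zero (𝔞 : Ideal R) (i : ℕ) (y) : lcPi I 𝔞 (i+1) y = 0 ↔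
    ∃ w ∈ torSub 𝔞 (I.cocomplex.X i), dI I i w = y.1 := by
  constructor
  · intro h
    obtain ⟨s, hs, h⟩ := (lcCl_zero I 𝔞 _ _ _).1 h
    obtain ⟨w, hw, h⟩ := (xiM_zero_iff I _ _ _).1 h
    exact ⟨w, ⟨s, hw⟩, h⟩
  · rintro ⟨w, ⟨s, hw⟩, h⟩
    have hy : y.1 ∈ annSub (𝔞 ^ s) _ := by
      rw [← h]
      exact mem_annSub.2 fun a ha => by rw [← map_smul, hw a ha, map_zero]
    rw [lcPi_eq I 𝔞 (i+1) s y ⟨y.1, y.2.1, hy⟩ rfl]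
    change (lcI 𝔞 (i+1) M s).hom ((extCmp (i+1) _ M).symm (xiM I (𝔞 ^ s) (i+1) _)) = _
    rw [(xiM_zero_iff I _ _ _).2 ⟨w, hw, h⟩, map_zero, map_zero]

end LocCoh

section GammaInj
variable {R}

lemma torSub_of_fg [IsNoetherianRing R] (𝔞 : Ideal R) {X Y : Type u} [AddCommGroup X]
    [Module R X] [AddCommGroup Y] [Module R Y] [Module.Finite R X] (f : X →ₗ[R] Y)
    (hf : ∀ x, f x ∈ torSub 𝔞 Y) : ∃ t : ℕ, ∀ x, f x ∈ annSub (𝔞 ^ t) Y := by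
  obtain ⟨S, hS⟩ := (Module.Finite.fg_top : (⊤ : Submodule R X).FG)
  have h : ∀ F : Finset X, ∃ t : ℕ, ∀ x ∈ F, f x ∈ annSub (𝔞 ^ t) Y := by
    classical
    intro F
    induction F using Finset.induction_on with
    | empty => exact ⟨0, by simp⟩
    | insert a F _ ih =>
      obtain ⟨t, ht⟩ := ih
      obtain ⟨s, hs⟩ := mem_torSub.1 (hf a)
      refine ⟨max s t, fun x hx => ?_⟩
      rcases Finset.mem_insert.1 hx with rfl | hx
      · exact annSub_anti (Ideal.pow_le_pow_right (le_max_left _ _)) _ hs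
      · exact annSub_anti (Ideal.pow_le_pow_right (le_max_right _ _)) _ (ht x hx)
  obtain ⟨t, ht⟩ := h S
  refine ⟨t, fun x => ?_⟩
  have : (⊤ : Submodule R X) ≤ (annSub (𝔞 ^ t) Y).comap f := by
    rw [← hS, Submodule.span_le]
    exact fun x hx => ht x hx
  exact this (Submodule.mem_top : x ∈ ⊤)

lemma torSub_injective [IsNoetherianRing R] (𝔞 : Ideal R) (J : Type u) [AddCommGroup J]
    [Module R J] [hJ : Module.Injective R J] : Module.Injective R ↥(torSub 𝔞 J) := by
  apply Module.Baer.injective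
  intro 𝔟 f
  obtain ⟨t, ht⟩ := torSub_of_fg 𝔞 ((torSub 𝔞 J).subtype ∘ₗ f) (fun x => (f x).2)
  obtain ⟨k, hk⟩ := Ideal.exists_pow_inf_eq_pow_smul 𝔞 (N := 𝔟)
  have hn := hk (t + k) (by omega)
  rw [Nat.add_sub_cancel] at hn
  let φ : 𝔟 →ₗ[R] (R ⧸ 𝔞 ^ (t + k)) := (𝔞 ^ (t + k)).mkQ ∘ₗ 𝔟.subtype
  have hker : LinearMap.ker φ ≤ LinearMap.ker ((torSub 𝔞 J).subtype ∘ₗ f) := by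
    intro x hx
    have hx1 : x.1 ∈ 𝔞 ^ (t + k) := by
      simpa [φ, Ideal.Quotient.eq_zero_iff_mem] using hx
    have hx2 : x.1 ∈ 𝔞 ^ t • 𝔟 := by
      have : x.1 ∈ 𝔞 ^ (t + k) • (⊤ : Submodule R R) ⊓ 𝔟 := ⟨by simpa using hx1, x.2⟩
      rw [hn] at this
      exact Submodule.smul_mono le_rfl inf_le_right this
    have hx3 : x ∈ 𝔞 ^ t • (⊤ : Submodule R 𝔟) := by
      have h4 : (𝔞 ^ t • (⊤ : Submodule R 𝔟)).map 𝔟.subtype = 𝔞 ^ t • 𝔟 := by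
        rw [Submodule.map_smul'', Submodule.map_top, Submodule.range_subtype]
      rw [← h4] at hx2
      obtain ⟨y, hy, hyx⟩ := hx2
      rwa [← Subtype.ext hyx]
    refine Submodule.smul_induction_on hx3 (fun r hr n _ => ?_) (fun a b ha hb => add_mem ha hb)
    rw [LinearMap.mem_ker, map_smul]
    exact ht n r hr
  obtain ⟨h, hh⟩ := hJ.out (LinearMap.range φ).subtype (Submodule.subtype_injective _)
    ((LinearMap.ker φ).liftQ ((torSub 𝔞 J).subtype ∘ₗ f) hker ∘ₗ φ.quotKerEquivRange.symm.toLinearMap)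
  have hh' : ∀ x : 𝔟, h (φ x) = (f x).1 := by
    intro x
    have := hh ⟨φ x, x, rfl⟩
    refine this.trans ?_
    have e : φ.quotKerEquivRange.symm ⟨φ x, x, rfl⟩ = Submodule.Quotient.mk x := by
      rw [LinearEquiv.symm_apply_eq]; rfl
    simp only [LinearMap.comp_apply, LinearEquiv.coe_coe, e]
    rfl
  have hmem : h (Submodule.Quotient.mk 1) ∈ torSub 𝔞 J := by
    refine ⟨t + k, fun a ha => ?_⟩
    rw [← map_smul, ← Submodule.Quotient.mk_smul, smul_eq_mul, mul_one,
      (Submodule.Quotient.mk_eq_zero _).2 ha, map_zero]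
  refine ⟨LinearMap.toSpanSingleton R _ ⟨_, hmem⟩, fun x hx => Subtype.ext ?_⟩
  rw [← hh' ⟨x, hx⟩]
  change x • h (Submodule.Quotient.mk 1) = h (Submodule.Quotient.mk x)
  rw [← map_smul, ← Submodule.Quotient.mk_smul, smul_eq_mul, mul_one]

end GammaInj

section WLBasics
variable {R}
variable {A B C : Type u} [AddCommGroup A] [Module R A] [AddCommGroup B] [Module R B]
  [AddCommGroup C] [Module R C]

lemma WL_of_surj (f : A →ₗ[R] B) (hf : Function.Surjective f) (h : IsWeaklyLaskerian R A) :
    IsWeaklyLaskerian R B := by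
  intro N
  have hs : Function.Surjective (N.mkQ ∘ₗ f) := (Submodule.mkQ_surjective N).comp hf
  rw [← LinearEquiv.AssociatedPrimes.eq ((N.mkQ ∘ₗ f).quotKerEquivOfSurjective hs)]
  exact h _

lemma WL_of_inj (f : A →ₗ[R] B) (hf : Function.Injective f) (h : IsWeaklyLaskerian R B) :
    IsWeaklyLaskerian R A := by
  intro N
  refine (h (N.map f)).subset (associatedPrimes.subset_of_injective
    (f := Submodule.mapQ N (N.map f) f (Submodule.le_comap_map f N)) ?_)
  rw [← LinearMap.ker_eq_bot, Submodule.mapQ, Submodule.ker_liftQ_eq_bot]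
  intro x hx
  rw [LinearMap.mem_ker, LinearMap.comp_apply, Submodule.mkQ_apply,
    Submodule.Quotient.mk_eq_zero] at hx
  obtain ⟨y, hy, hyx⟩ := hx
  rwa [← hf hyx]

lemma WL_equiv (e : A ≃ₗ[R] B) (h : IsWeaklyLaskerian R A) : IsWeaklyLaskerian R B :=
  WL_of_surj e.toLinearMap e.surjective h

lemma WL_of_sub (K : Submodule R B) (h1 : IsWeaklyLaskerian R K)
    (h2 : IsWeaklyLaskerian R (B ⧸ K)) : IsWeaklyLaskerian R B := by
  intro N
  let K' : Submodule R (B ⧸ N) := K.map N.mkQ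
  have hK' : IsWeaklyLaskerian R K' :=
    WL_of_surj (N.mkQ.submoduleMap K) (N.mkQ.submoduleMap_surjective K) h1
  have hC : IsWeaklyLaskerian R ((B ⧸ N) ⧸ K') := by
    refine WL_of_surj (Submodule.mapQ K K' N.mkQ (Submodule.le_comap_map _ _)) ?_ h2
    intro x
    obtain ⟨y, rfl⟩ := Submodule.mkQ_surjective K' x
    obtain ⟨z, rfl⟩ := Submodule.mkQ_surjective N y
    exact ⟨Submodule.Quotient.mk z, rfl⟩
  have e1 := (hK' ⊥)
  have e2 := (hC ⊥)
  rw [LinearEquiv.AssociatedPrimes.eq (Submodule.quotEquivOfEqBot _ rfl)] at e1 e2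
  refine (e1.union e2).subset (associatedPrimes.subset_union_of_exact
    (f := K'.subtype) (g := K'.mkQ) (Submodule.subtype_injective _) ?_)
  exact LinearMap.exact_subtype_mkQ K'

lemma WL_of_exact (f : A →ₗ[R] B) (g : B →ₗ[R] C) (h : ∀ b, g b = 0 → ∃ a, f a = b)
    (hA : IsWeaklyLaskerian R A) (hC : IsWeaklyLaskerian R C) : IsWeaklyLaskerian R B := by
  have h1 : IsWeaklyLaskerian R (LinearMap.range f) :=
    WL_of_surj f.rangeRestrict f.surjective_rangeRestrict hA
  have hle : LinearMap.ker g ≤ LinearMap.range f := fun b hb => h b hb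
  have h2 : IsWeaklyLaskerian R (LinearMap.ker g) :=
    WL_of_inj (Submodule.inclusion hle) (Submodule.inclusion_injective hle) h1
  have h3 : IsWeaklyLaskerian R (B ⧸ LinearMap.ker g) :=
    WL_equiv g.quotKerEquivRange.symm (WL_of_inj _ (Submodule.subtype_injective _) hC)
  exact WL_of_sub _ h2 h3

lemma WL_of_finite [IsNoetherianRing R] [Module.Finite R A] : IsWeaklyLaskerian R A :=
  fun N => associatedPrimes.finite R (A ⧸ N)

lemma WL_of_subsingleton [Subsingleton A] : IsWeaklyLaskerian R A := fun N => by
  have : Subsingleton (A ⧸ N) := (Submodule.mkQ_surjective N).subsingleton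
  rw [associatedPrimes.eq_empty_of_subsingleton]; exact Set.finite_empty

lemma ass_mem_support [IsNoetherianRing R] {p : Ideal R} (hp : p ∈ associatedPrimes R A) :
    ⟨p, hp.1⟩ ∈ Module.support R A := by
  rw [Module.mem_support_iff_exists_annihilator]
  obtain ⟨x, hx⟩ := (isAssociatedPrime_iff.1 hp).2
  refine ⟨x, ?_⟩
  change _ ≤ p
  rw [hx]
  intro r hr
  simpa [Submodule.mem_annihilator_span_singleton] using hr

lemma WL_of_finite_support [IsNoetherianRing R] (h : (Module.support R A).Finite) :
    IsWeaklyLaskerian R A := fun N => by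
  refine (h.image PrimeSpectrum.asIdeal).subset fun p hp => ?_
  refine ⟨⟨p, hp.1⟩, ?_, rfl⟩
  exact Module.support_subset_of_surjective N.mkQ (Submodule.mkQ_surjective N)
    (ass_mem_support hp)

lemma WL_pi {ι : Type u} [Finite ι] (h : IsWeaklyLaskerian R A) :
    IsWeaklyLaskerian R (ι → A) := by
  classical
  have : ∀ n : ℕ, IsWeaklyLaskerian R (Fin n → A) := by
    intro n
    induction n with
    | zero => exact WL_of_subsingleton
    | succ n ih =>
      refine WL_of_exact (LinearMap.single R (fun _ : Fin (n+1) => A) 0)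
        (LinearMap.funLeft R A Fin.succ) (fun b hb => ⟨b 0, ?_⟩) h ih
      ext i
      refine Fin.cases ?_ (fun j => ?_) i
      · simp
      · have := congrFun hb j
        simpa [LinearMap.funLeft] using this.symm
  obtain ⟨n, ⟨e⟩⟩ := Finite.exists_equiv_fin ι
  exact WL_equiv (LinearEquiv.funCongrLeft R A e) (this n)

end WLBasics

section ExtInterface
open CategoryTheory CategoryTheory.Abelian
variable {R}

/-- `Ext^j(R/𝔞, Y)`. -/
abbrev EX (𝔞 : Ideal R) (Y : Type u) [AddCommGroup Y] [Module R Y] (j : ℕ) : Type u :=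
  Abelian.Ext.{u} (ModuleCat.of R (R ⧸ 𝔞)) (ModuleCat.of R Y) j

variable (𝔞 : Ideal R)
variable {A B C : Type u} [AddCommGroup A] [Module R A] [AddCommGroup B] [Module R B]
  [AddCommGroup C] [Module R C]

noncomputable def exm (f : A →ₗ[R] B) (j : ℕ) : EX 𝔞 A j →ₗ[R] EX 𝔞 B j :=
  (Ext.mk₀ (ModuleCat.ofHom f)).postcompOfLinear R (ModuleCat.of R (R ⧸ 𝔞)) (add_zero j)

lemma exm_apply (f : A →ₗ[R] B) (j : ℕ) (e : EX 𝔞 A j) :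
    exm 𝔞 f j e = e.comp (Ext.mk₀ (ModuleCat.ofHom f)) (add_zero j) := rfl

lemma exm_comp (f : A →ₗ[R] B) (g : B →ₗ[R] C) (j : ℕ) (e : EX 𝔞 A j) :
    exm 𝔞 (g ∘ₗ f) j e = exm 𝔞 g j (exm 𝔞 f j e) := by
  simp only [exm_apply, ModuleCat.ofHom_comp]
  simp

lemma exm_smul {x : R} (hx : x ∈ 𝔞) (j : ℕ) (e : EX 𝔞 A j) :
    exm 𝔞 (x • LinearMap.id : A →ₗ[R] A) j e = 0 := by
  have h1 : exm 𝔞 (x • LinearMap.id : A →ₗ[R] A) j e = x • e := by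
    rw [exm_apply]
    have : ModuleCat.ofHom (x • LinearMap.id : A →ₗ[R] A) = x • 𝟙 (ModuleCat.of R A) := rfl
    rw [this, Ext.mk₀_smul]; simp
  have h2 : x • e = (Ext.mk₀ (x • 𝟙 (ModuleCat.of R (R ⧸ 𝔞)))).comp e (zero_add _) := by
    simp [Ext.mk₀_smul]
  have h3 : x • 𝟙 (ModuleCat.of R (R ⧸ 𝔞)) = 0 := by
    apply ModuleCat.hom_ext
    apply Submodule.linearMap_qext
    apply LinearMap.ext_ring
    change x • (Submodule.Quotient.mk 1 : R ⧸ 𝔞) = 0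
    rw [← Submodule.Quotient.mk_smul, smul_eq_mul, mul_one,
      (Submodule.Quotient.mk_eq_zero _).2 hx]
  rw [h1, h2, h3]; simp

noncomputable def ex0L : EX 𝔞 A 0 ≃ₗ[R] (ModuleCat.of R (R ⧸ 𝔞) ⟶ ModuleCat.of R A) :=
  Ext.linearEquiv₀

/-- The degree zero identification. -/
noncomputable def ex0 : EX 𝔞 A 0 →ₗ[R] A where
  toFun e := (ex0L 𝔞 e).hom (Submodule.Quotient.mk 1)
  map_add' := by intro x y; rw [map_add]; rfl
  map_smul' := by intro r x; rw [map_smul]; rfl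

lemma ex0_injective : Function.Injective (ex0 𝔞 : EX 𝔞 A 0 →ₗ[R] A) := by
  intro x y h
  exact (ex0L 𝔞).injective (qHom_ext h)

lemma ex0_mem (e : EX 𝔞 A 0) : ex0 𝔞 e ∈ annSub 𝔞 A := by
  obtain ⟨y, hy, h⟩ := qHom_surj (ex0L 𝔞 e)
  change (ex0L 𝔞 e).hom (Submodule.Quotient.mk 1) ∈ _
  rw [← h, qHom_mk, one_smul]
  exact hy

lemma ex0_exists (a : A) (ha : a ∈ annSub 𝔞 A) : ∃ e : EX 𝔞 A 0, ex0 𝔞 e = a := by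
  refine ⟨(ex0L 𝔞).symm (qHom 𝔞 (ModuleCat.of R A) a ha), ?_⟩
  change (ex0L 𝔞 _).hom (Submodule.Quotient.mk 1) = _
  rw [LinearEquiv.apply_symm_apply, qHom_mk, one_smul]

lemma ex0_exm (f : A →ₗ[R] B) (e : EX 𝔞 A 0) : ex0 𝔞 (exm 𝔞 f 0 e) = f (ex0 𝔞 e) := by
  obtain ⟨g, rfl⟩ := (ex0L 𝔞).symm.surjective e
  have : exm 𝔞 f 0 ((ex0L 𝔞).symm g) =
      (ex0L 𝔞).symm (g ≫ ModuleCat.ofHom f) := by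
    rw [exm_apply]
    exact Ext.mk₀_comp_mk₀ _ _
  rw [this]
  change (ex0L 𝔞 _).hom _ = f ((ex0L 𝔞 _).hom _)
  rw [LinearEquiv.apply_symm_apply, LinearEquiv.apply_symm_apply]
  rfl

noncomputable def ex0Equiv : EX 𝔞 A 0 ≃ₗ[R] annSub 𝔞 A :=
  LinearEquiv.ofBijective ((ex0 𝔞).codRestrict _ (ex0_mem 𝔞))
    ⟨fun _ _ h => ex0_injective 𝔞 (congrArg Subtype.val h),
     fun a => (ex0_exists 𝔞 a.1 a.2).imp fun _ h => Subtype.ext h⟩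

/-- Long exact sequence. -/
lemma ex_les (f : A →ₗ[R] B) (g : B →ₗ[R] C) (hf : Function.Injective f)
    (hg : Function.Surjective g) (hfg : Function.Exact f g) :
    ∃ δ : ∀ j, EX 𝔞 C j →ₗ[R] EX 𝔞 A (j+1),
      (∀ j e, exm 𝔞 g j e = 0 → ∃ e', exm 𝔞 f j e' = e) ∧
      (∀ j e, δ j e = 0 ↔ ∃ e', exm 𝔞 g j e' = e) ∧
      (∀ j e, exm 𝔞 f (j+1) e = 0 ↔ ∃ e', δ j e' = e) := by
  have hS : (ModuleCat.shortComplexOfCompEqZero f g hfg.linearMap_comp_eq_zero).ShortExact :=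
    ModuleCat.shortComplex_shortExact _ hfg hf hg
  refine ⟨fun j => hS.extClass.postcompOfLinear R (ModuleCat.of R (R ⧸ 𝔞)) rfl, ?_, ?_, ?_⟩
  · intro j e he
    exact Ext.covariant_sequence_exact₂ _ hS e he
  · intro j e
    refine ⟨fun he => Ext.covariant_sequence_exact₃ _ hS e rfl he, ?_⟩
    rintro ⟨e', rfl⟩
    exact (Ext.comp_assoc_of_second_deg_zero e' (Ext.mk₀ _) hS.extClass rfl).trans
      ((congrArg (fun z => Ext.comp e' z rfl) hS.comp_extClass).trans (Ext.comp_zero _ _ _ _ _))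
  · intro j e
    refine ⟨fun he => Ext.covariant_sequence_exact₁ _ hS e he rfl, ?_⟩
    rintro ⟨e', rfl⟩
    exact (Ext.comp_assoc_of_third_deg_zero e' hS.extClass (Ext.mk₀ _) rfl).trans
      ((congrArg (fun z => Ext.comp e' z rfl) hS.extClass_comp).trans (Ext.comp_zero _ _ _ _ _))

lemma ex_subsingleton (J : Type u) [AddCommGroup J] [Module R J] [Module.Injective R J] (j : ℕ) :
    Subsingleton (EX 𝔞 J (j+1)) := by
  have : Injective (ModuleCat.of R J) := Module.injective_object_of_injective_module R J
  exact Ext.subsingleton_of_injective _ _ _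

noncomputable def exEquiv (e : A ≃ₗ[R] B) (j : ℕ) : EX 𝔞 A j ≃ₗ[R] EX 𝔞 B j :=
  LinearEquiv.ofLinearMap (exm 𝔞 e.toLinearMap j) (exm 𝔞 e.symm.toLinearMap j)
    (by ext x; rw [LinearMap.comp_apply, ← exm_comp, LinearEquiv.comp_symm, exm_apply]; simp)
    (by ext x; rw [LinearMap.comp_apply, ← exm_comp, LinearEquiv.symm_comp, exm_apply]; simp)

lemma WL_ext [IsNoetherianRing R] (N V : ModuleCat.{u} R) [Module.Finite R N]
    (hV : IsWeaklyLaskerian R V) (i : ℕ) : IsWeaklyLaskerian R (Abelian.Ext.{u} N V i) := by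
  induction i generalizing N with
  | zero =>
    refine WL_equiv (Ext.linearEquiv₀.trans ModuleCat.homLinearEquiv : _ ≃ₗ[R] _).symm ?_
    obtain ⟨n, f, hf⟩ := Module.Finite.exists_fin' R N
    have h1 : IsWeaklyLaskerian R ((Fin n → R) →ₗ[R] V) := by
      have h2 : IsWeaklyLaskerian R (ULift.{u} (Fin n) → V) := WL_pi hV
      exact WL_equiv ((LinearEquiv.funCongrLeft R V Equiv.ulift.symm : _ ≃ₗ[R] (Fin n → V)) ≪≫ₗ
        ((Pi.basisFun R (Fin n)).constr R)) h2
    exact WL_of_inj (LinearMap.lcomp R V f) (fun a b h => by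
      ext x
      obtain ⟨y, rfl⟩ := hf x
      exact LinearMap.congr_fun h y) h1
  | succ n ih =>
    obtain ⟨N, _, _, _, _, f, surjf⟩ := Module.exists_finite_presentation R N
    let exac := LinearMap.shortExact_shortComplexKer surjf
    exact WL_of_surj (exac.extClass.precompOfLinear R V (add_comm 1 n))
      (precomp_extClass_surjective_of_projective_X₂ V exac n) (ih _)

lemma WL_EX [IsNoetherianRing R] (hA : IsWeaklyLaskerian R A) (j : ℕ) :
    IsWeaklyLaskerian R (EX 𝔞 A j) := by
  have : Module.Finite R (ModuleCat.of R (R ⧸ 𝔞)) :=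
    inferInstanceAs (Module.Finite R (R ⧸ 𝔞))
  exact WL_ext (ModuleCat.of R (R ⧸ 𝔞)) (ModuleCat.of R A) hA j

lemma WL_EX_equiv (e : A ≃ₗ[R] B) (j : ℕ) (h : IsWeaklyLaskerian R (EX 𝔞 A j)) :
    IsWeaklyLaskerian R (EX 𝔞 B j) := WL_equiv (exEquiv 𝔞 e j) h

lemma WL_EX0_iff : IsWeaklyLaskerian R (EX 𝔞 A 0) ↔ IsWeaklyLaskerian R (annSub 𝔞 A) :=
  ⟨WL_equiv (ex0Equiv 𝔞), WL_equiv (ex0Equiv 𝔞).symm⟩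

lemma WL_EX_zero (f : A →ₗ[R] B) (hf : Function.Injective f)
    (h : IsWeaklyLaskerian R (EX 𝔞 B 0)) : IsWeaklyLaskerian R (EX 𝔞 A 0) := by
  refine WL_of_inj (exm 𝔞 f 0) (fun x y hxy => ex0_injective 𝔞 (hf ?_)) h
  rw [← ex0_exm, ← ex0_exm, hxy]

lemma WL_EX2 (f : A →ₗ[R] B) (g : B →ₗ[R] C) (hf : Function.Injective f)
    (hg : Function.Surjective g) (hfg : Function.Exact f g) (j : ℕ) (h1 : IsWeaklyLaskerian R (EX 𝔞 A j))
    (h3 : IsWeaklyLaskerian R (EX 𝔞 C j)) : IsWeaklyLaskerian R (EX 𝔞 B j) := by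
  obtain ⟨δ, e2, e3, e1⟩ := ex_les 𝔞 f g hf hg hfg
  exact WL_of_exact _ _ (e2 j) h1 h3

lemma WL_EX1 (f : A →ₗ[R] B) (g : B →ₗ[R] C) (hf : Function.Injective f)
    (hg : Function.Surjective g) (hfg : Function.Exact f g) (j : ℕ) (h3 : IsWeaklyLaskerian R (EX 𝔞 C j))
    (h2 : IsWeaklyLaskerian R (EX 𝔞 B (j+1))) : IsWeaklyLaskerian R (EX 𝔞 A (j+1)) := by
  obtain ⟨δ, e2, e3, e1⟩ := ex_les 𝔞 f g hf hg hfg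
  exact WL_of_exact _ _ (fun e => (e1 j e).1) h3 h2

lemma WL_EX3 (f : A →ₗ[R] B) (g : B →ₗ[R] C) (hf : Function.Injective f)
    (hg : Function.Surjective g) (hfg : Function.Exact f g) (j : ℕ) (h2 : IsWeaklyLaskerian R (EX 𝔞 B j))
    (h1 : IsWeaklyLaskerian R (EX 𝔞 A (j+1))) : IsWeaklyLaskerian R (EX 𝔞 C j) := by
  obtain ⟨δ, e2, e3, e1⟩ := ex_les 𝔞 f g hf hg hfg
  exact WL_of_exact _ _ (fun e => (e3 j e).1) h2 h1

end ExtInterface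

section ArtinianLemmas
variable {R}
variable {D : Type u} [AddCommGroup D] [Module R D]

/-- Auxiliary: `x^k N ∩ ker x`. -/
def levelSub (x : R) (k : ℕ) (N : Submodule R D) : Submodule R D where
  carrier := {y | x • y = 0 ∧ ∃ n ∈ N, x ^ k • n = y}
  add_mem' := by
    rintro a b ⟨ha, n, hn, rfl⟩ ⟨hb, m, hm, rfl⟩
    exact ⟨by rw [smul_add, ha, hb, add_zero], n + m, add_mem hn hm, smul_add _ _ _⟩
  zero_mem' := ⟨smul_zero _, 0, zero_mem _, smul_zero _⟩
  smul_mem' := by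
    rintro r a ⟨ha, n, hn, rfl⟩
    exact ⟨by rw [smul_comm, ha, smul_zero], r • n, N.smul_mem r hn, smul_comm _ _ _⟩

lemma levelSub_mono (x : R) {k l : ℕ} (hkl : k ≤ l) {N N' : Submodule R D} (h : N ≤ N') :
    levelSub x l N ≤ levelSub x k N' := by
  rintro y ⟨hy, n, hn, rfl⟩
  refine ⟨hy, x ^ (l - k) • n, h (N.smul_mem _ hn), ?_⟩
  rw [smul_smul, ← pow_add, Nat.add_sub_cancel' hkl]

lemma levelSub_eq (x : R) (htor : ∀ y : D, ∃ k : ℕ, x ^ k • y = 0)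
    {N N' : Submodule R D} (h : N ≤ N') (he : ∀ k, levelSub x k N' ≤ levelSub x k N) :
    N = N' := by
  refine le_antisymm h ?_
  have : ∀ k : ℕ, ∀ y ∈ N', x ^ k • y = 0 → y ∈ N := by
    intro k
    induction k with
    | zero => intro y _ hy0; rw [pow_zero, one_smul] at hy0; rw [hy0]; exact zero_mem _
    | succ k ih =>
      intro y hy hy0
      have h1 : x ^ k • y ∈ levelSub x k N' :=
        ⟨by rw [smul_smul, ← pow_succ', hy0], y, hy, rfl⟩
      obtain ⟨-, n, hn, h2⟩ := he k h1
      have h3 : y - n ∈ N := ih (y - n) (sub_mem hy (h hn)) (by rw [smul_sub, h2, sub_self])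
      simpa using add_mem h3 hn
  intro y hy
  obtain ⟨k, hk⟩ := htor y
  exact this k y hy hk

lemma artinian_of_elt (x : R) (htor : ∀ y : D, ∃ k : ℕ, x ^ k • y = 0)
    (hart : IsArtinian R (annSub (Ideal.span {x}) D)) : IsArtinian R D := by
  rw [← monotone_stabilizes_iff_artinian]
  intro f
  -- stabilisation for decreasing sequences inside the kernel
  have key : ∀ g : ℕ → Submodule R D, (∀ i j, i ≤ j → g j ≤ g i) →
      (∀ i, g i ≤ annSub (Ideal.span {x}) D) → ∃ n, ∀ m, n ≤ m → g n = g m := by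
    intro g hg hle
    obtain ⟨n, hn⟩ := monotone_stabilizes_iff_artinian.2 hart
      ⟨fun i => OrderDual.toDual ((g i).comap (annSub (Ideal.span {x}) D).subtype),
       fun i j hij => Submodule.comap_mono (hg i j hij)⟩
    refine ⟨n, fun m hm => ?_⟩
    have h1 : (g n).comap (annSub (Ideal.span {x}) D).subtype =
      (g m).comap (annSub (Ideal.span {x}) D).subtype := hn m hm
    have h2 := congrArg (Submodule.map (annSub (Ideal.span {x}) D).subtype) h1
    rwa [Submodule.map_comap_subtype, Submodule.map_comap_subtype,
      inf_eq_right.2 (hle n), inf_eq_right.2 (hle m)] at h2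
  let N : ℕ → Submodule R D := fun i => OrderDual.ofDual (f i)
  have hN : ∀ i j, i ≤ j → N j ≤ N i := fun i j hij => f.monotone hij
  have hlev : ∀ k M, levelSub x k M ≤ annSub (Ideal.span {x}) D := by
    rintro k M y ⟨hy, -⟩ a ha
    obtain ⟨c, rfl⟩ := Ideal.mem_span_singleton'.1 ha
    rw [mul_smul, hy, smul_zero]
  obtain ⟨i0, hi0⟩ := key (fun i => levelSub x i (N i))
    (fun i j hij => levelSub_mono x hij (hN i j hij)) (fun i => hlev _ _)
  have hk : ∀ k, ∃ n, ∀ m, n ≤ m → levelSub x k (N n) = levelSub x k (N m) := fun k =>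
    key (fun i => levelSub x k (N i)) (fun i j hij => levelSub_mono x le_rfl (hN i j hij))
      (fun i => hlev _ _)
  choose nk hnk using hk
  refine ⟨max i0 ((Finset.range i0).sup nk), fun m hm => ?_⟩
  set n := max i0 ((Finset.range i0).sup nk) with hn
  refine (levelSub_eq x htor (hN n m hm) (fun k => ?_)).symm
  by_cases hki : k < i0
  · have h1 : nk k ≤ n := (Finset.le_sup (f := nk) (Finset.mem_range.2 hki)).trans (le_max_right _ _)
    rw [← hnk k n h1, ← hnk k m (h1.trans hm)]
  · push Not at hki
    have h1 : levelSub x k (N n) ≤ levelSub x i0 (N i0) :=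
      levelSub_mono x hki (hN _ _ (le_max_left _ _))
    have h2 : levelSub x i0 (N i0) = levelSub x (max k m) (N (max k m)) :=
      hi0 _ (hki.trans (le_max_left _ _))
    exact h1.trans (h2.le.trans (levelSub_mono x (le_max_left _ _) (hN _ _ (le_max_right _ _))))

lemma artinian_of_tor (I : Ideal R) (hI : I.FG) (htor : torSub I D = ⊤)
    (hart : IsArtinian R (annSub I D)) : IsArtinian R D := by
  obtain ⟨s, rfl⟩ := hI
  classical
  induction s using Finset.induction_on generalizing D with
  | empty =>
    have : annSub (Ideal.span ((∅ : Finset R) : Set R)) D = ⊤ := by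
      rw [eq_top_iff]
      intro y _ a ha
      rw [Finset.coe_empty, Ideal.span_empty, Ideal.mem_bot] at ha
      rw [ha, zero_smul]
    rw [this] at hart
    exact (LinearEquiv.isArtinian_iff Submodule.topEquiv).1 hart
  | insert x s hx ih =>
    have hxm : x ∈ Ideal.span ((insert x s : Finset R) : Set R) :=
      Ideal.subset_span (by simp)
    have hsm : Ideal.span (s : Set R) ≤ Ideal.span ((insert x s : Finset R) : Set R) :=
      Ideal.span_mono (by simp)
    have hD : ∀ y : D, ∃ t : ℕ, y ∈ annSub (Ideal.span ((insert x s : Finset R) : Set R) ^ t) D :=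
      fun y => mem_torSub.1 (htor ▸ Submodule.mem_top)
    refine artinian_of_elt x (fun y => ?_) ?_
    · obtain ⟨t, ht⟩ := hD y
      exact ⟨t, ht _ (Ideal.pow_mem_pow hxm t)⟩
    · refine ih ?_ ?_
      · rw [eq_top_iff]
        intro y _
        obtain ⟨t, ht⟩ := hD y.1
        exact ⟨t, fun a ha => Subtype.ext (ht a (Ideal.pow_right_mono hsm t ha))⟩
      · let φ : annSub (Ideal.span (s : Set R)) (annSub (Ideal.span {x}) D) →ₗ[R]
            annSub (Ideal.span ((insert x s : Finset R) : Set R)) D :=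
          LinearMap.codRestrict _ ((Submodule.subtype _) ∘ₗ (Submodule.subtype _)) (fun y => by
            intro a ha
            rw [Finset.coe_insert, Ideal.span_insert] at ha
            obtain ⟨b, hb, c, hc, rfl⟩ := Submodule.mem_sup.1 ha
            have e1 : b • (y.1.1 : D) = 0 := y.1.2 b hb
            have e2 : c • (y.1.1 : D) = 0 := congrArg Subtype.val (y.2 c hc)
            change (b + c) • (y.1.1 : D) = 0
            rw [add_smul, e1, e2, add_zero])
        exact isArtinian_of_injective φ (fun y z h => by
          have h' : (y.1.1 : D) = z.1.1 :=
            congrArg (Subtype.val : annSub (Ideal.span ((insert x s : Finset R) : Set R)) D → D) h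
          exact Subtype.ext (Subtype.ext h'))

open Pointwise in
lemma avoid_aux [IsNoetherianRing R] [IsArtinian R D] (I : Ideal R) (E : Submodule R D) :
    ∃ F : Set (Ideal R), F.Finite ∧ (∀ q ∈ F, q.IsPrime ∧ ¬ I ≤ q) ∧
      ∀ x : R, (∀ q ∈ F, x ∉ q) → ∃ k : ℕ, I ^ k • E ≤ E.map (LinearMap.lsmul R D x) := by
  induction E using (wellFounded_lt (α := Submodule R D)).induction with
  | _ E ih =>
  by_cases hsum : ∃ E1 E2 : Submodule R D, E1 < E ∧ E2 < E ∧ E1 ⊔ E2 = E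
  · obtain ⟨E1, E2, h1, h2, he⟩ := hsum
    obtain ⟨F1, hf1, hp1, hx1⟩ := ih E1 h1
    obtain ⟨F2, hf2, hp2, hx2⟩ := ih E2 h2
    refine ⟨F1 ∪ F2, hf1.union hf2, ?_, fun x hx => ?_⟩
    · rintro q (hq | hq)
      exacts [hp1 q hq, hp2 q hq]
    · obtain ⟨k1, hk1⟩ := hx1 x fun q hq => hx q (Or.inl hq)
      obtain ⟨k2, hk2⟩ := hx2 x fun q hq => hx q (Or.inr hq)
      refine ⟨max k1 k2, ?_⟩
      rw [← he, Submodule.smul_sup, Submodule.map_sup]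
      exact sup_le_sup
        ((Submodule.smul_mono_left (Ideal.pow_le_pow_right (le_max_left _ _))).trans hk1)
        ((Submodule.smul_mono_left (Ideal.pow_le_pow_right (le_max_right _ _))).trans hk2)
  · -- dichotomy
    have hdich : ∀ x : R, (E ≤ E.map (LinearMap.lsmul R D x)) ∨
        ∃ n : ℕ, ∀ e ∈ E, x ^ n • e = 0 := by
      intro x
      let φ : Module.End R E := LinearMap.lsmul R E x
      have hφ : ∀ n (e : E), (((φ ^ n) e : E) : D) = x ^ n • (e : D) := by
        intro n
        induction n with
        | zero => intro e; simp
        | succ n ihn =>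
          intro e
          rw [pow_succ', Module.End.mul_apply]
          change x • (((φ ^ n) e : E) : D) = _
          rw [ihn, smul_smul, pow_succ']
      obtain ⟨n, hn⟩ := (φ.eventually_codisjoint_ker_pow_range_pow.and
        (Filter.eventually_ge_atTop 1)).exists
      obtain ⟨hc, hn1⟩ := hn
      let E1 := (LinearMap.ker (φ ^ n)).map E.subtype
      let E2 := (LinearMap.range (φ ^ n)).map E.subtype
      have hs : E1 ⊔ E2 = E := by
        rw [← Submodule.map_sup, codisjoint_iff.1 hc, Submodule.map_subtype_top]
      have l1 : E1 ≤ E := Submodule.map_subtype_le _ _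
      have l2 : E2 ≤ E := Submodule.map_subtype_le _ _
      rcases l1.lt_or_eq with l1 | l1
      · rcases l2.lt_or_eq with l2 | l2
        · exact absurd ⟨E1, E2, l1, l2, hs⟩ hsum
        · left
          rintro y hy
          rw [← l2] at hy
          obtain ⟨_, ⟨z, rfl⟩, rfl⟩ := hy
          refine ⟨x ^ (n - 1) • (z : D), E.smul_mem _ z.2, ?_⟩
          change x • x ^ (n - 1) • (z : D) = (((φ ^ n) z : E) : D)
          rw [hφ, smul_smul, ← pow_succ', Nat.sub_add_cancel hn1]
      · right
        refine ⟨n, fun e he => ?_⟩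
        rw [← l1] at he
        obtain ⟨z, hz, rfl⟩ := he
        have := congrArg Subtype.val (LinearMap.mem_ker.1 hz)
        rw [hφ] at this
        exact this
    let q : Ideal R := (E.annihilator).radical
    have hq : ∀ x, x ∈ q ↔ ∃ n : ℕ, ∀ e ∈ E, x ^ n • e = 0 := fun x => by
      simp only [q, Ideal.mem_radical_iff, Submodule.mem_annihilator]
    by_cases hIq : I ≤ q
    · obtain ⟨k, hk⟩ := Ideal.exists_pow_le_of_le_radical_of_fg hIq (IsNoetherian.noetherian I)
      refine ⟨∅, Set.finite_empty, by simp, fun x _ => ⟨k, ?_⟩⟩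
      refine (Submodule.smul_mono_left hk).trans ?_
      rw [Submodule.annihilator_smul]
      exact bot_le
    · refine ⟨{q}, Set.finite_singleton q, ?_, fun x hx => ⟨0, ?_⟩⟩
      · rintro _ rfl
        refine ⟨⟨?_, ?_⟩, hIq⟩
        · intro h
          exact hIq (h ▸ le_top)
        · intro x y hxy
          by_contra hcon
          push Not at hcon
          obtain ⟨hx, hy⟩ := hcon
          have hsx := (hdich x).resolve_right (fun h => hx ((hq x).2 h))
          have hpow : ∀ n : ℕ, ∀ e ∈ E, ∃ e' ∈ E, x ^ n • e' = e := by
            intro n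
            induction n with
            | zero => intro e he; exact ⟨e, he, by simp⟩
            | succ n ihn =>
              intro e he
              obtain ⟨e1, he1, rfl⟩ := hsx he
              obtain ⟨e2, he2, rfl⟩ := ihn e1 he1
              exact ⟨e2, he2, by rw [pow_succ', mul_smul]; rfl⟩
          obtain ⟨n, hn⟩ := (hq _).1 hxy
          refine hy ((hq y).2 ⟨n, fun e he => ?_⟩)
          obtain ⟨e', he', rfl⟩ := hpow n e he
          rw [smul_smul, mul_comm, ← mul_pow]
          exact hn e' he'
      · rw [pow_zero, Ideal.one_eq_top, Submodule.top_smul]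
        exact (hdich x).resolve_right (fun h => hx q rfl ((hq x).2 h))

lemma noeth_iff_art [IsNoetherianRing R] {Q : Ideal R} [IsArtinianRing (R ⧸ Q)] (hD : ∀ a ∈ Q, ∀ y : D, a • y = 0) :
    IsNoetherian R D ↔ IsArtinian R D := by
  have hT : Module.IsTorsionBySet R D Q := fun y a => hD a.1 a.2 y
  let _ := hT.module
  have : IsScalarTower R (R ⧸ Q) D := hT.isScalarTower
  have h := IsSemiprimaryRing.isNoetherian_iff_isArtinian (R := R ⧸ Q) (M := D)
  constructor
  · intro h1
    have := h.1 (isNoetherian_of_tower R h1)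
    exact isArtinian_of_surjective_algebraMap (R := R ⧸ Q) (S := R) Ideal.Quotient.mk_surjective
  · intro h1
    have := h.2 (isArtinian_of_tower R h1)
    have : Module.Finite R D := Module.Finite.trans (R ⧸ Q) D
    infer_instance

lemma artinianRing_quot [IsNoetherianRing R] (I : Ideal R)
    (hmax : ∀ p : Ideal R, p.IsPrime → I ≤ p → p.IsMaximal) (k : ℕ) :
    IsArtinianRing (R ⧸ I ^ k) := by
  rw [isArtinianRing_iff_isNoetherianRing_krullDimLE_zero]
  refine ⟨inferInstance, Ring.KrullDimLE.mk₀ fun P hP => ?_⟩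
  have h1 : (P.comap (Ideal.Quotient.mk (I ^ k))).IsPrime := inferInstance
  have h2 : I ≤ P.comap (Ideal.Quotient.mk (I ^ k)) := by
    refine fun a ha => h1.mem_of_pow_mem k ?_
    rw [Ideal.mem_comap, Ideal.Quotient.eq_zero_iff_mem.2 (Ideal.pow_mem_pow ha k)]
    exact zero_mem _
  have h3 := hmax _ h1 h2
  rcases Ideal.map_eq_top_or_isMaximal_of_surjective (Ideal.Quotient.mk (I ^ k))
    Ideal.Quotient.mk_surjective h3 with h4 | h4
  · rw [Ideal.map_comap_of_surjective _ Ideal.Quotient.mk_surjective] at h4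
    exact absurd h4 hP.ne_top
  · rwa [Ideal.map_comap_of_surjective _ Ideal.Quotient.mk_surjective] at h4

end ArtinianLemmas

section BigPrimes
variable {R}

/-- The primes over `𝔞` contained in infinitely many primes. -/
def bigP (𝔞 : Ideal R) : Set (Ideal R) :=
  {p | p.IsPrime ∧ 𝔞 ≤ p ∧ {q : Ideal R | q.IsPrime ∧ p ≤ q}.Infinite}

lemma bigP_min {𝔞 : Ideal R} (hdim : ringKrullDim (R ⧸ 𝔞) = 1) {p q : Ideal R} (hp : p ∈ bigP 𝔞)
    (hq : q.IsPrime) (h1 : 𝔞 ≤ q) (h2 : q ≤ p) : q = p := by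
  by_contra hne
  obtain ⟨hpp, hap, hinf⟩ := hp
  obtain ⟨m, ⟨hm, hpm⟩, hmp⟩ := (hinf.sdiff (Set.finite_singleton p)).nonempty
  have hlt1 : q < p := lt_of_le_of_ne h2 hne
  have hlt2 : p < m := lt_of_le_of_ne hpm (fun h => hmp h.symm)
  rw [ringKrullDim_quotient] at hdim
  let a0 : PrimeSpectrum.zeroLocus (𝔞 : Set R) := ⟨⟨q, hq⟩, h1⟩
  let a1 : PrimeSpectrum.zeroLocus (𝔞 : Set R) := ⟨⟨p, hpp⟩, hap⟩
  let a2 : PrimeSpectrum.zeroLocus (𝔞 : Set R) := ⟨⟨m, hm⟩, hap.trans hpm⟩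
  have l1 : a0 < a1 := hlt1
  have l2 : a1 < a2 := hlt2
  let s : LTSeries (PrimeSpectrum.zeroLocus (𝔞 : Set R)) :=
    { length := 2
      toFun := ![a0, a1, a2]
      step := by
        intro i
        fin_cases i
        · exact l1
        · exact l2 }
  have := Order.LTSeries.length_le_krullDim s
  rw [hdim] at this
  have h3 : s.length = 2 := rfl
  rw [h3] at this
  norm_cast at this

lemma bigP_finite [IsNoetherianRing R] {𝔞 : Ideal R} (hdim : ringKrullDim (R ⧸ 𝔞) = 1) :
    (bigP 𝔞).Finite := by
  refine (Ideal.finite_minimalPrimes_of_isNoetherianRing R 𝔞).subset fun p hp => ?_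
  refine ⟨⟨hp.1, hp.2.1⟩, fun q hq hqp => ?_⟩
  exact (bigP_min hdim hp hq.1 hq.2 hqp).ge

/-- Complement of the union of the big primes. -/
def Sm (𝔞 : Ideal R) : Submonoid R where
  carrier := {s | ∀ p ∈ bigP 𝔞, s ∉ p}
  mul_mem' := fun {_ _} ha hb p hp h => (hp.1.mem_or_mem h).elim (ha p hp) (hb p hp)
  one_mem' := fun p hp h => hp.1.ne_top ((Ideal.eq_top_iff_one p).2 h)

lemma Sm_avoid [IsNoetherianRing R] {𝔞 : Ideal R} (hdim : ringKrullDim (R ⧸ 𝔞) = 1) (I : Ideal R)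
    (h : ∀ s ∈ Sm 𝔞, s ∉ I) : ∃ p ∈ bigP 𝔞, I ≤ p := by
  have := (Ideal.subset_union_prime_finite (bigP_finite hdim) (f := id) (⊥ : Ideal R) ⊥
    (fun p hp _ _ => hp.1) (I := I)).1 ?_
  · exact this
  · intro x hx
    by_contra hc
    refine h x (fun p hp hxp => hc ?_) hx
    exact Set.mem_biUnion hp hxp

/-- Finite generation up to `Sm`-torsion. -/
def SFin (𝔞 : Ideal R) (W : Type u) [AddCommGroup W] [Module R W] : Prop :=
  ∃ L : Submodule R W, L.FG ∧ ∀ w, ∃ s ∈ Sm 𝔞, s • w ∈ L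

variable {W : Type u} [AddCommGroup W] [Module R W]

lemma SFin_ext {𝔞 : Ideal R} (K : Submodule R W) (h1 : SFin 𝔞 K) (h2 : SFin 𝔞 (W ⧸ K)) :
    SFin 𝔞 W := by
  classical
  obtain ⟨L1, f1, g1⟩ := h1
  obtain ⟨L2, ⟨t, rfl⟩, g2⟩ := h2
  let σ : W ⧸ K → W := Function.surjInv K.mkQ_surjective
  have hσ : ∀ z, K.mkQ (σ z) = z := Function.surjInv_eq K.mkQ_surjective
  refine ⟨L1.map K.subtype ⊔ Submodule.span R (t.image σ : Finset W),
    (f1.map _).sup ⟨_, rfl⟩, fun w => ?_⟩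
  obtain ⟨s, hs, hw⟩ := g2 (K.mkQ w)
  have hmap : (Submodule.span R ((t.image σ : Finset W) : Set W)).map K.mkQ =
      Submodule.span R (t : Set (W ⧸ K)) := by
    rw [Submodule.map_span, Finset.coe_image, ← Set.image_comp]
    congr 1
    ext z
    simp [hσ]
  rw [← hmap, ← map_smul] at hw
  obtain ⟨y, hy, hyw⟩ := hw
  have hk : s • w - y ∈ K := by
    rw [← Submodule.ker_mkQ K, LinearMap.mem_ker, map_sub, hyw, sub_self]
  obtain ⟨s', hs', hk'⟩ := g1 ⟨_, hk⟩
  refine ⟨s' * s, mul_mem hs' hs, ?_⟩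
  have : (s' * s) • w = s' • (s • w - y) + s' • y := by
    rw [smul_sub, sub_add_cancel, mul_smul]
  rw [this]
  exact Submodule.add_mem_sup ⟨_, hk', rfl⟩ (Submodule.smul_mem _ _ hy)

lemma indep_mem (p : Ideal R) [p.IsPrime] (hT : Module.IsTorsionBySet R W p) (u : ℕ → W)
    (hu : letI := hT.module; LinearIndependent (R ⧸ p) u) (d : ℕ →₀ R)
    (hd : Finsupp.linearCombination R u d = 0) (j : ℕ) : d j ∈ p := by
  let _ := hT.module
  have h1 : Finsupp.linearCombination (R ⧸ p) u
      (d.mapRange (Ideal.Quotient.mk p) (map_zero _)) = 0 := by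
    rw [← hd, Finsupp.linearCombination_apply, Finsupp.linearCombination_apply,
      Finsupp.sum_mapRange_index (fun i => zero_smul (R ⧸ p) (u i))]
    rfl
  have h2 := (linearIndependent_iff.1 hu) _ h1
  have h3 := DFunLike.congr_fun h2 j
  exact Ideal.Quotient.eq_zero_iff_mem.1 (by simpa using h3)

lemma not_WL_of_indep [IsNoetherianRing R] (p : Ideal R) [p.IsPrime]
    (hinf : {q : Ideal R | q.IsPrime ∧ p ≤ q}.Infinite)
    (u : ℕ → W)
    (hu : ∀ d : ℕ →₀ R, Finsupp.linearCombination R u d = 0 → ∀ j, d j ∈ p)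
    (hW : IsWeaklyLaskerian R W) : False := by
  let m : ℕ ↪ {q : Ideal R | q.IsPrime ∧ p ≤ q} := hinf.natEmbedding
  let C : Submodule R (ℕ →₀ R) :=
    { carrier := {c | ∀ j, c j ∈ (m j).1}
      add_mem' := fun ha hb j => add_mem (ha j) (hb j)
      zero_mem' := fun j => zero_mem _
      smul_mem' := fun r c hc j => Ideal.mul_mem_left _ _ (hc j) }
  let N : Submodule R W := C.map (Finsupp.linearCombination R u)
  have key : ∀ i r, r • u i ∈ N ↔ r ∈ (m i).1 := by
    intro i r
    constructor
    · rintro ⟨c, hc, hce⟩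
      have h1 : Finsupp.linearCombination R u (Finsupp.single i r - c) = 0 := by
        rw [map_sub, hce, Finsupp.linearCombination_single, sub_self]
      have h2 := (m i).2.2 (hu _ h1 i)
      have h3 : r - c i ∈ (m i).1 := by simpa using h2
      have := add_mem h3 (hc i)
      simpa using this
    · intro hr
      refine ⟨Finsupp.single i r, fun j => ?_, Finsupp.linearCombination_single ..⟩
      by_cases hij : i = j
      · subst hij; simpa using hr
      · rw [Finsupp.single_eq_of_ne' hij]; exact zero_mem _
  refine Set.infinite_of_injective_forall_mem (f := fun i => (m i).1)
    (fun i j hij => m.injective (Subtype.ext hij)) (fun i => ?_) (hW N)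
  refine isAssociatedPrime_iff.2 ⟨(m i).2.1, N.mkQ (u i), ?_⟩
  ext r
  rw [Submodule.mem_colon_singleton, Submodule.mem_bot, ← map_smul, Submodule.mkQ_apply,
    Submodule.Quotient.mk_eq_zero, key]

lemma SFin_prime [IsNoetherianRing R] {𝔞 : Ideal R} (hdim : ringKrullDim (R ⧸ 𝔞) = 1)
    (p : Ideal R) [hp : p.IsPrime] (hap : 𝔞 ≤ p) (hpW : ∀ a ∈ p, ∀ w : W, a • w = 0)
    (hW : IsWeaklyLaskerian R W) : SFin 𝔞 W := by
  by_cases hb : p ∈ bigP 𝔞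
  · have hT : Module.IsTorsionBySet R W p := fun y a => hpW a.1 a.2 y
    let _ := hT.module
    have : IsScalarTower R (R ⧸ p) W := hT.isScalarTower
    obtain ⟨b, hb1, hb2⟩ := exists_maximal_linearIndepOn (R ⧸ p) (id : W → W)
    have hfin : b.Finite := by
      by_contra hinf
      have hinf : b.Infinite := hinf
      let u : ℕ ↪ b := hinf.natEmbedding
      have hu : LinearIndependent (R ⧸ p) (fun i => ((u i : b) : W)) :=
        LinearIndependent.comp hb1 u u.injective
      exact not_WL_of_indep p hb.2.2 (fun i => ((u i : b) : W)) (indep_mem p hT _ hu) hW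
    refine ⟨Submodule.span R b, Submodule.fg_span hfin, fun w => ?_⟩
    by_cases hw : w ∈ b
    · exact ⟨1, one_mem _, Submodule.smul_mem _ _ (Submodule.subset_span hw)⟩
    obtain ⟨a, ha, haw⟩ := hb2 w hw
    obtain ⟨r, rfl⟩ := Ideal.Quotient.mk_surjective a
    have hrp : r ∉ p := fun h => ha (Ideal.Quotient.eq_zero_iff_mem.2 h)
    have hrw : r • w ∈ Submodule.span R b := by
      have h1 := Submodule.restrictScalars_span R (R ⧸ p) Ideal.Quotient.mk_surjective b
      rw [← h1]
      simpa using haw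
    have : ∃ s ∈ Sm 𝔞, s ∈ Ideal.span {r} ⊔ p := by
      by_contra hcon
      push Not at hcon
      obtain ⟨q, hq, hle⟩ := Sm_avoid hdim _ hcon
      have := bigP_min hdim hq hp hap (le_sup_right.trans hle)
      exact hrp (this ▸ hle (Ideal.mem_sup_left (Ideal.mem_span_singleton_self r)))
    obtain ⟨s, hs, hsm⟩ := this
    refine ⟨s, hs, ?_⟩
    obtain ⟨y, hy, z, hz, rfl⟩ := Submodule.mem_sup.1 hsm
    obtain ⟨c, rfl⟩ := Ideal.mem_span_singleton'.1 hy
    rw [add_smul, hpW z hz, add_zero, mul_smul]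
    exact Submodule.smul_mem _ _ hrw
  · have : ∃ s ∈ Sm 𝔞, s ∈ p := by
      by_contra hcon
      push Not at hcon
      obtain ⟨q, hq, hle⟩ := Sm_avoid hdim _ hcon
      exact hb (bigP_min hdim hq hp hap hle ▸ hq)
    obtain ⟨s, hs, hsp⟩ := this
    exact ⟨⊥, Submodule.fg_bot, fun w => ⟨s, hs, by rw [hpW s hsp]; exact zero_mem _⟩⟩

lemma SFin_of_WL [IsNoetherianRing R] {𝔞 : Ideal R} (hdim : ringKrullDim (R ⧸ 𝔞) = 1)
    (𝔟 : Ideal R) (hab : 𝔞 ≤ 𝔟) (hbW : ∀ a ∈ 𝔟, ∀ w : W, a • w = 0)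
    (hW : IsWeaklyLaskerian R W) : SFin 𝔞 W := by
  induction 𝔟 using IsNoetherian.induction generalizing W with
  | hgt 𝔟 ih =>
  by_cases htop : 𝔟 = ⊤
  · refine ⟨⊥, Submodule.fg_bot, fun w => ⟨1, one_mem _, ?_⟩⟩
    rw [hbW 1 (htop ▸ Submodule.mem_top)]; exact zero_mem _
  by_cases hpr : Ideal.IsPrime 𝔟
  · exact SFin_prime hdim 𝔟 hab hbW hW
  · have : ∃ x y, x ∉ 𝔟 ∧ y ∉ 𝔟 ∧ x * y ∈ 𝔟 := by
      by_contra hcon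
      push Not at hcon
      exact hpr ⟨htop, fun {x y} hxy => by
        by_contra hc
        push Not at hc
        exact hcon x y hc.1 hc.2 hxy⟩
    obtain ⟨x, y, hx, hy, hxy⟩ := this
    have hlt : ∀ z ∉ 𝔟, 𝔟 < 𝔟 ⊔ Ideal.span {z} := fun z hz =>
      lt_of_le_of_ne le_sup_left (fun h => hz (by
        rw [h]; exact Ideal.mem_sup_right (Ideal.mem_span_singleton_self z)))
    let K : Submodule R W := LinearMap.range (LinearMap.lsmul R W x)
    refine SFin_ext K (ih _ (hlt y hy) (hab.trans le_sup_left) ?_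
        (WL_of_inj K.subtype K.subtype_injective hW))
      (ih _ (hlt x hx) (hab.trans le_sup_left) ?_ (WL_of_surj K.mkQ K.mkQ_surjective hW))
    · rintro a ha ⟨_, w, rfl⟩
      obtain ⟨b, hb, c, hc, rfl⟩ := Submodule.mem_sup.1 ha
      obtain ⟨c, rfl⟩ := Ideal.mem_span_singleton'.1 hc
      refine Subtype.ext ?_
      change (b + c * y) • x • w = 0
      rw [add_smul, hbW b hb, zero_add, mul_smul, smul_smul y x, mul_comm y x, hbW _ hxy, smul_zero]
    · intro a ha w
      obtain ⟨w, rfl⟩ := K.mkQ_surjective w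
      obtain ⟨b, hb, c, hc, rfl⟩ := Submodule.mem_sup.1 ha
      obtain ⟨c, rfl⟩ := Ideal.mem_span_singleton'.1 hc
      rw [← map_smul, add_smul, hbW b hb, zero_add, mul_comm, mul_smul, Submodule.mkQ_apply,
        Submodule.Quotient.mk_eq_zero]
      exact ⟨c • w, rfl⟩

end BigPrimes

section LocalizeArg
variable {R}
variable {T : Type u} [AddCommGroup T] [Module R T] (S : Submonoid R)

lemma loc_mem {Y : Submodule (Localization S) (LocalizedModule S T)} {z : LocalizedModule S T}
    (s : S) (h : (s : R) • z ∈ Y) : z ∈ Y := by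
  rw [← Submodule.smul_mem_iff_of_isUnit (r := algebraMap R (Localization S) s) Y
    (IsLocalization.map_units _ s), algebraMap_smul]
  exact h

lemma loc_surj (z : LocalizedModule S T) :
    ∃ (t : T) (s : S), (s : R) • z = LocalizedModule.mkLinearMap S T t := by
  obtain ⟨⟨t, s⟩, h⟩ := IsLocalizedModule.surj S (LocalizedModule.mkLinearMap S T) z
  exact ⟨t, s, h⟩

lemma loc_eq_zero {z : LocalizedModule S T} (s : S) (h : (s : R) • z = 0) : z = 0 := by
  have : z ∈ (⊥ : Submodule (Localization S) (LocalizedModule S T)) :=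
    loc_mem S s (by rw [h]; exact zero_mem _)
  simpa using this

lemma loc_ann_map (I : Ideal R) (z : LocalizedModule S T) (h : ∀ r ∈ I, r • z = 0)
    (b : Localization S) (hb : b ∈ I.map (algebraMap R (Localization S))) : b • z = 0 := by
  have : I.map (algebraMap R (Localization S)) ≤
      LinearMap.ker (LinearMap.toSpanSingleton (Localization S) (LocalizedModule S T) z) := by
    rw [Ideal.map_le_iff_le_comap]
    intro r hr
    change algebraMap R (Localization S) r • z = 0
    rw [algebraMap_smul, h r hr]
  exact this hb

lemma loc_tor (𝔞 : Ideal R) (htor : torSub 𝔞 T = ⊤) :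
    torSub (𝔞.map (algebraMap R (Localization S))) (LocalizedModule S T) = ⊤ := by
  rw [eq_top_iff]
  intro z _
  obtain ⟨t, s, hs⟩ := loc_surj S z
  obtain ⟨k, hk⟩ := mem_torSub.1 (show t ∈ torSub 𝔞 T from htor ▸ Submodule.mem_top)
  refine ⟨k, fun b hb => ?_⟩
  rw [← Ideal.map_pow] at hb
  refine loc_ann_map S (𝔞 ^ k) z (fun r hr => loc_eq_zero S s ?_) b hb
  rw [smul_comm, hs, ← map_smul, hk r hr, map_zero]

lemma loc_ann_clear [IsNoetherianRing R] (𝔞 : Ideal R) (t : T)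
    (h : ∀ a ∈ 𝔞, LocalizedModule.mkLinearMap S T (a • t) = 0) :
    ∃ u : S, (u : R) • t ∈ annSub 𝔞 T := by
  classical
  obtain ⟨g, hg⟩ := IsNoetherian.noetherian 𝔞
  have h1 : ∀ a ∈ 𝔞, ∃ u : S, (u : R) • a • t = 0 := fun a ha =>
    (IsLocalizedModule.eq_zero_iff S (LocalizedModule.mkLinearMap S T)).1 (h a ha)
  have h2 : ∀ g' : Finset R, (∀ a ∈ g', a ∈ 𝔞) → ∃ u : S, ∀ a ∈ g', (u : R) • a • t = 0 := by
    intro g'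
    induction g' using Finset.induction_on with
    | empty => intro _; exact ⟨1, by simp⟩
    | insert a g' _ ih =>
      intro hm
      obtain ⟨u, hu⟩ := ih fun b hb => hm b (Finset.mem_insert_of_mem hb)
      obtain ⟨v, hv⟩ := h1 a (hm a (Finset.mem_insert_self _ _))
      refine ⟨u * v, fun b hb => ?_⟩
      rcases Finset.mem_insert.1 hb with rfl | hb
      · rw [Submonoid.coe_mul, mul_smul, hv, smul_zero]
      · rw [Submonoid.coe_mul, mul_comm, mul_smul, hu b hb, smul_zero]
  obtain ⟨u, hu⟩ := h2 g fun a ha => hg ▸ Submodule.subset_span ha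
  refine ⟨u, fun a ha => ?_⟩
  have h3 : 𝔞 ≤ LinearMap.ker (LinearMap.toSpanSingleton R T ((u : R) • t)) := by
    rw [← hg, Submodule.span_le]
    intro b hb
    change b • (u : R) • t = 0
    rw [smul_comm]
    exact hu b hb
  exact h3 ha

lemma loc_prime_max [IsNoetherianRing R] {𝔞 : Ideal R} (hdim : ringKrullDim (R ⧸ 𝔞) = 1)
    (P : Ideal (Localization (Sm 𝔞))) (hP : P.IsPrime)
    (hle : 𝔞.map (algebraMap R (Localization (Sm 𝔞))) ≤ P) : P.IsMaximal := by
  obtain ⟨m, hm, hPm⟩ := Ideal.exists_le_maximal P hP.ne_top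
  have hmp := hm.isPrime
  have key : ∀ Q : Ideal (Localization (Sm 𝔞)), Q.IsPrime →
      𝔞.map (algebraMap R (Localization (Sm 𝔞))) ≤ Q → Q.comap (algebraMap R _) ∈ bigP 𝔞 := by
    intro Q hQ hQa
    obtain ⟨q, hq, hle⟩ := Sm_avoid hdim (Q.comap (algebraMap R _)) (fun s hs h =>
      hQ.ne_top (Ideal.eq_top_of_isUnit_mem _ h (IsLocalization.map_units _ (⟨s, hs⟩ : Sm 𝔞))))
    have := bigP_min hdim hq (hQ.comap _) (Ideal.map_le_iff_le_comap.1 hQa) hle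
    rwa [this]
  have h1 := key m hmp (hle.trans hPm)
  have h2 := bigP_min hdim h1 (hP.comap (algebraMap R _)) (Ideal.map_le_iff_le_comap.1 hle)
    (Ideal.comap_mono hPm)
  have h3 : P = m := by
    have e1 := IsLocalization.map_under (Sm 𝔞) (Localization (Sm 𝔞)) P
    have e2 := IsLocalization.map_under (Sm 𝔞) (Localization (Sm 𝔞)) m
    rw [← e1, ← e2]
    exact congrArg _ h2
  rwa [h3]

lemma SFin_of_loc (V : Type u) [AddCommGroup V] [Module R V] (𝔞 : Ideal R)
    (h : Module.Finite (Localization (Sm 𝔞)) (LocalizedModule (Sm 𝔞) V)) : SFin 𝔞 V := by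
  classical
  obtain ⟨e, he⟩ := h.fg_top
  choose v s hvs using loc_surj (Sm 𝔞) (T := V)
  refine ⟨Submodule.span R (e.image v : Finset V), ⟨_, rfl⟩, fun w => ?_⟩
  set L := Submodule.span R ((e.image v : Finset V) : Set V) with hL
  have htop : Submodule.localized' (Localization (Sm 𝔞)) (Sm 𝔞)
      (LocalizedModule.mkLinearMap (Sm 𝔞) V) L = ⊤ := by
    rw [eq_top_iff, ← he, Submodule.span_le]
    intro z hz
    refine ⟨v z, Submodule.subset_span (by simpa using ⟨z, hz, rfl⟩), s z, ?_⟩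
    rw [IsLocalizedModule.mk'_eq_iff]
    exact (hvs z).symm
  have hw : LocalizedModule.mkLinearMap (Sm 𝔞) V w ∈ Submodule.localized' (Localization (Sm 𝔞))
    (Sm 𝔞) (LocalizedModule.mkLinearMap (Sm 𝔞) V) L := htop ▸ Submodule.mem_top
  obtain ⟨m, hm, s, hms⟩ := hw
  rw [IsLocalizedModule.mk'_eq_iff] at hms
  have h0 : LocalizedModule.mkLinearMap (Sm 𝔞) V (m - (s : R) • w) = 0 := by
    rw [map_sub, map_smul, hms]
    exact sub_self _
  obtain ⟨u, hu⟩ := (IsLocalizedModule.eq_zero_iff (Sm 𝔞) _).1 h0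
  refine ⟨u * s, mul_mem u.2 s.2, ?_⟩
  have hu' : (u : R) • m - (u : R) • (s : R) • w = 0 := by rw [← smul_sub]; exact hu
  rw [mul_smul, ← sub_eq_zero.1 hu']
  exact L.smul_mem _ hm

lemma loc_artinian [IsNoetherianRing R] {𝔞 : Ideal R} (hdim : ringKrullDim (R ⧸ 𝔞) = 1)
    (htor : torSub 𝔞 T = ⊤) (hWL : IsWeaklyLaskerian R (annSub 𝔞 T)) :
    IsArtinian (Localization (Sm 𝔞)) (LocalizedModule (Sm 𝔞) T) := by
  have : IsNoetherianRing (Localization (Sm 𝔞)) :=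
    IsLocalization.isNoetherianRing (Sm 𝔞) _ inferInstance
  refine artinian_of_tor _ (IsNoetherian.noetherian _) (loc_tor (Sm 𝔞) 𝔞 htor) ?_
  have hArt := artinianRing_quot (𝔞.map (algebraMap R (Localization (Sm 𝔞))))
    (loc_prime_max hdim) 1
  refine (noeth_iff_art (Q := (𝔞.map (algebraMap R (Localization (Sm 𝔞)))) ^ 1)
    (D := annSub (𝔞.map (algebraMap R (Localization (Sm 𝔞)))) (LocalizedModule (Sm 𝔞) T))
    (fun a ha y => Subtype.ext (y.2 a (by simpa using ha)))).1 ?_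
  obtain ⟨L, hL, hLs⟩ := SFin_of_WL hdim 𝔞 le_rfl
    (fun a ha (w : annSub 𝔞 T) => Subtype.ext (w.2 a ha)) hWL
  obtain ⟨g, hg⟩ := hL
  classical
  let Y : Submodule (Localization (Sm 𝔞)) (LocalizedModule (Sm 𝔞) T) :=
    Submodule.span _ ((fun l : annSub 𝔞 T => LocalizedModule.mkLinearMap (Sm 𝔞) T l.1) '' g)
  have hY : IsNoetherian (Localization (Sm 𝔞)) Y :=
    isNoetherian_of_fg_of_noetherian _ (Submodule.fg_span (g.finite_toSet.image _))
  have hLY : ∀ l ∈ L, LocalizedModule.mkLinearMap (Sm 𝔞) T l.1 ∈ Y := by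
    have : L ≤ (Y.restrictScalars R).comap
        (LocalizedModule.mkLinearMap (Sm 𝔞) T ∘ₗ (annSub 𝔞 T).subtype) := by
      rw [← hg, Submodule.span_le]
      intro l hl
      exact Submodule.subset_span ⟨l, hl, rfl⟩
    exact fun l hl => this hl
  refine isNoetherian_of_le (t := Y) ?_
  intro z hz
  obtain ⟨t, s, hs⟩ := loc_surj (Sm 𝔞) z
  obtain ⟨u, hu⟩ := loc_ann_clear (Sm 𝔞) 𝔞 t (fun a ha => by
    rw [map_smul, ← hs, smul_comm]
    have := hz _ (Ideal.mem_map_of_mem (algebraMap R (Localization (Sm 𝔞))) ha)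
    rw [algebraMap_smul] at this
    rw [this, smul_zero])
  obtain ⟨s', hs', hl⟩ := hLs ⟨_, hu⟩
  refine loc_mem (Sm 𝔞) s (loc_mem (Sm 𝔞) u (loc_mem (Sm 𝔞) ⟨s', hs'⟩ ?_))
  rw [hs, ← map_smul, ← map_smul]
  exact hLY _ hl

lemma exists_elt [IsNoetherianRing R] {𝔞 : Ideal R} (hdim : ringKrullDim (R ⧸ 𝔞) = 1)
    (htor : torSub 𝔞 T = ⊤) (hWL : IsWeaklyLaskerian R (annSub 𝔞 T)) (J : Ideal R)
    (hJ : ¬ 𝔞 ≤ J) : ∃ x ∈ 𝔞, x ∉ J ∧ SFin 𝔞 (T ⧸ LinearMap.range (LinearMap.lsmul R T x)) := by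
  have hnoe : IsNoetherianRing (Localization (Sm 𝔞)) :=
    IsLocalization.isNoetherianRing (Sm 𝔞) _ inferInstance
  have hart := loc_artinian hdim htor hWL
  obtain ⟨F, hF, hFp, hFx⟩ := avoid_aux (𝔞.map (algebraMap R (Localization (Sm 𝔞))))
    (⊤ : Submodule (Localization (Sm 𝔞)) (LocalizedModule (Sm 𝔞) T))
  have hav : ∃ x ∈ 𝔞, x ∉ J ∧ ∀ q ∈ F, algebraMap R (Localization (Sm 𝔞)) x ∉ q := by
    by_contra hcon
    push Not at hcon
    have := (Ideal.subset_union_prime_finite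
      ((hF.image (Ideal.comap (algebraMap R (Localization (Sm 𝔞))))).insert J) (f := id) J J
      (fun p hp hpJ _ => by
        rcases hp with rfl | ⟨q, hq, rfl⟩
        · exact absurd rfl hpJ
        · exact (hFp q hq).1.comap _) (I := 𝔞)).1 ?_
    · obtain ⟨p, hp, hle⟩ := this
      rcases hp with rfl | ⟨q, hq, rfl⟩
      · exact hJ hle
      · exact (hFp q hq).2 (Ideal.map_le_iff_le_comap.2 hle)
    · intro x hx
      by_cases hxJ : x ∈ J
      · exact Set.mem_biUnion (Set.mem_insert _ _) hxJ
      · obtain ⟨q, hq, hxq⟩ := hcon x hx hxJ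
        exact Set.mem_biUnion (Set.mem_insert_of_mem _ ⟨q, hq, rfl⟩) hxq
  obtain ⟨x, hx, hxJ, hxF⟩ := hav
  obtain ⟨k, hk⟩ := hFx _ hxF
  refine ⟨x, hx, hxJ, SFin_of_loc _ 𝔞 ?_⟩
  set K := LinearMap.range (LinearMap.lsmul R T x) with hK
  have hx0 : ∀ w : LocalizedModule (Sm 𝔞) (T ⧸ K), x • w = 0 := by
    intro w
    obtain ⟨v, s, hs⟩ := loc_surj (Sm 𝔞) w
    refine loc_eq_zero (Sm 𝔞) s ?_
    rw [smul_comm, hs, ← map_smul]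
    obtain ⟨t, rfl⟩ := K.mkQ_surjective v
    have : x • K.mkQ t = 0 := by
      rw [← map_smul, Submodule.mkQ_apply, Submodule.Quotient.mk_eq_zero]
      exact ⟨t, rfl⟩
    rw [this, map_zero]
  have hsurj := LocalizedModule.map_surjective (Sm 𝔞) K.mkQ K.mkQ_surjective
  have hartV : IsArtinian (Localization (Sm 𝔞)) (LocalizedModule (Sm 𝔞) (T ⧸ K)) :=
    isArtinian_of_surjective _ _ hsurj
  have hArt := artinianRing_quot (𝔞.map (algebraMap R (Localization (Sm 𝔞))))
    (loc_prime_max hdim) k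
  have := (noeth_iff_art (Q := (𝔞.map (algebraMap R (Localization (Sm 𝔞)))) ^ k) (fun b hb w => by
    obtain ⟨z, rfl⟩ := hsurj w
    obtain ⟨z', -, hz'⟩ := hk (Submodule.smul_mem_smul hb (Submodule.mem_top (x := z)))
    rw [← map_smul, ← hz']
    change LocalizedModule.map (Sm 𝔞) K.mkQ (algebraMap R (Localization (Sm 𝔞)) x • z') = 0
    rw [map_smul, algebraMap_smul, hx0])).2 hartV
  infer_instance

end LocalizeArg

section CoreThm
variable {R}

lemma tor_of_surj {𝔞 : Ideal R} {A B : Type u} [AddCommGroup A] [Module R A] [AddCommGroup B]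
    [Module R B] (f : A →ₗ[R] B) (hf : Function.Surjective f) (h : torSub 𝔞 A = ⊤) :
    torSub 𝔞 B = ⊤ := by
  rw [eq_top_iff]
  intro b _
  obtain ⟨a, rfl⟩ := hf b
  obtain ⟨t, ht⟩ := mem_torSub.1 (h ▸ Submodule.mem_top : a ∈ torSub 𝔞 A)
  exact ⟨t, fun r hr => by rw [← map_smul, ht r hr, map_zero]⟩

lemma tor_of_inj {𝔞 : Ideal R} {A B : Type u} [AddCommGroup A] [Module R A] [AddCommGroup B]
    [Module R B] (f : A →ₗ[R] B) (hf : Function.Injective f) (h : torSub 𝔞 B = ⊤) :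
    torSub 𝔞 A = ⊤ := by
  rw [eq_top_iff]
  intro a _
  obtain ⟨t, ht⟩ := mem_torSub.1 (h ▸ Submodule.mem_top : f a ∈ torSub 𝔞 B)
  exact ⟨t, fun r hr => hf (by rw [map_smul, ht r hr, map_zero])⟩

lemma ass_tor [IsNoetherianRing R] {𝔞 : Ideal R} {Q : Type u} [AddCommGroup Q] [Module R Q]
    (htor : torSub 𝔞 Q = ⊤) {p : Ideal R} (hp : p ∈ associatedPrimes R Q) :
    𝔞 ≤ p ∧ ∃ v : Q, v ∈ annSub 𝔞 Q ∧ ∀ r, r ∈ p ↔ r • v = 0 := by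
  obtain ⟨hpp, v, hv⟩ := isAssociatedPrime_iff.1 hp
  have hv' : ∀ r, r ∈ p ↔ r • v = 0 := by
    intro r
    rw [hv]
    simp [Submodule.mem_colon_singleton]
  obtain ⟨t, ht⟩ := mem_torSub.1 (htor ▸ Submodule.mem_top : v ∈ torSub 𝔞 Q)
  have hle : 𝔞 ^ t ≤ p := fun r hr => (hv' r).2 (ht r hr)
  have hle' : 𝔞 ≤ p := hpp.le_of_pow_le hle
  exact ⟨hle', v, fun r hr => (hv' r).1 (hle' hr), hv'⟩

lemma WL_of_Sm_torsion [IsNoetherianRing R] {𝔞 : Ideal R} {Q : Type u} [AddCommGroup Q]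
    [Module R Q] (htor : torSub 𝔞 Q = ⊤) (hWL : IsWeaklyLaskerian R (annSub 𝔞 Q))
    (hS : ∀ w : Q, ∃ s ∈ Sm 𝔞, s • w = 0) : IsWeaklyLaskerian R Q := by
  have hass : (associatedPrimes R Q).Finite := by
    have h0 := hWL ⊥
    rw [LinearEquiv.AssociatedPrimes.eq (Submodule.quotEquivOfEqBot _ rfl)] at h0
    refine h0.subset fun p hp => ?_
    obtain ⟨-, v, hv, hv'⟩ := ass_tor htor hp
    refine isAssociatedPrime_iff.2 ⟨hp.1, ⟨v, hv⟩, ?_⟩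
    ext r
    rw [hv' r]
    simp [Submodule.mem_colon_singleton]
  apply WL_of_finite_support
  have hfin : (⋃ p ∈ associatedPrimes R Q, {q : Ideal R | q.IsPrime ∧ p ≤ q}).Finite := by
    refine hass.biUnion fun p hp => ?_
    obtain ⟨hap, v, hv, hv'⟩ := ass_tor htor hp
    by_contra hinf
    obtain ⟨s, hs, hsv⟩ := hS v
    exact hs p ⟨hp.1, hap, hinf⟩ ((hv' s).2 hsv)
  refine Set.Finite.of_finite_image (f := PrimeSpectrum.asIdeal) (hfin.subset ?_)
    (fun _ _ _ _ h => PrimeSpectrum.ext h)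
  rintro _ ⟨q, hq, rfl⟩
  obtain ⟨w, hw⟩ := Module.mem_support_iff_exists_annihilator.1 hq
  obtain ⟨p, hp, hpq⟩ := Ideal.exists_minimalPrimes_le hw
  have hp' : p ∈ associatedPrimes R (Submodule.span R {w}) :=
    Module.associatedPrimes.minimalPrimes_annihilator_subset_associatedPrimes R _ hp
  refine Set.mem_biUnion (x := p) ?_ ⟨q.2, hpq⟩
  exact associatedPrimes.subset_of_injective (f := (Submodule.span R {w}).subtype)
    (Submodule.injective_subtype _) hp'

theorem core_aux [IsNoetherianRing R] {𝔞 : Ideal R} (hdim : ringKrullDim (R ⧸ 𝔞) = 1)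
    (I : Ideal R) : ∀ (T : Type u) [AddCommGroup T] [Module R T],
    Module.annihilator R T = I → torSub 𝔞 T = ⊤ →
    IsWeaklyLaskerian R (EX 𝔞 T 0) → IsWeaklyLaskerian R (EX 𝔞 T 1) →
    ∀ j, IsWeaklyLaskerian R (EX 𝔞 T j) := by
  induction I using WellFoundedGT.induction with
  | ind I ih =>
  intro T _ _ hI htor h0 h1
  by_cases hle : 𝔞 ≤ I
  · intro j
    refine WL_EX 𝔞 ?_ j
    refine WL_of_surj (annSub 𝔞 T).subtype (fun t => ⟨⟨t, fun a ha => ?_⟩, rfl⟩)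
      ((WL_EX0_iff 𝔞).1 h0)
    exact Module.mem_annihilator.1 (hI ▸ hle ha) t
  obtain ⟨x, hx, hxI, hSF⟩ := exists_elt hdim htor ((WL_EX0_iff 𝔞).1 h0) I hle
  set m : T →ₗ[R] T := LinearMap.lsmul R T x with hm
  obtain ⟨L, hL, hLS⟩ := hSF
  have exK : Function.Exact (LinearMap.ker m).subtype m.rangeRestrict := by
    intro t
    refine ⟨fun h => ⟨⟨t, ?_⟩, rfl⟩, ?_⟩
    · exact congrArg Subtype.val h
    · rintro ⟨y, rfl⟩
      exact Subtype.ext y.2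
  have injK : Function.Injective (LinearMap.ker m).subtype := Submodule.injective_subtype _
  have surR : Function.Surjective m.rangeRestrict := m.surjective_rangeRestrict
  have injR : Function.Injective (LinearMap.range m).subtype := Submodule.injective_subtype _
  have surV : Function.Surjective (LinearMap.range m).mkQ := Submodule.mkQ_surjective _
  have exR : Function.Exact (LinearMap.range m).subtype (LinearMap.range m).mkQ :=
    LinearMap.exact_subtype_mkQ _
  have K0 := WL_EX_zero 𝔞 _ injK h0
  have R0 := WL_EX_zero 𝔞 _ injR h0
  have K1 := WL_EX1 𝔞 _ _ injK surR exK 0 R0 h1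
  have hlt : I < Module.annihilator R (LinearMap.ker m) := by
    refine lt_of_le_of_ne ?_ fun h => hxI ?_
    · rw [← hI]
      exact LinearMap.annihilator_le_of_injective _ injK
    · rw [h, Module.mem_annihilator]
      exact fun y => Subtype.ext y.2
  have KK := ih _ hlt _ rfl (tor_of_inj _ injK htor) K0 K1
  have R1 := WL_EX3 𝔞 _ _ injK surR exK 1 h1 (KK 2)
  have V0 := WL_EX3 𝔞 _ _ injR surV exR 0 h0 R1
  have hLf : Module.Finite R L := Module.Finite.iff_fg.2 hL
  have hLWL : IsWeaklyLaskerian R L := WL_of_finite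
  have Q0 := WL_EX3 𝔞 L.subtype L.mkQ (Submodule.injective_subtype _) (Submodule.mkQ_surjective _)
    (LinearMap.exact_subtype_mkQ _) 0 V0 (WL_EX 𝔞 hLWL 1)
  have hQ : IsWeaklyLaskerian R ((T ⧸ LinearMap.range m) ⧸ L) := by
    refine WL_of_Sm_torsion
      (tor_of_surj _ (Submodule.mkQ_surjective _) (tor_of_surj _ surV htor)) ((WL_EX0_iff 𝔞).1 Q0) ?_
    intro w
    obtain ⟨v, rfl⟩ := L.mkQ_surjective w
    obtain ⟨s, hs, hsv⟩ := hLS v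
    refine ⟨s, hs, ?_⟩
    rw [← map_smul]
    exact (Submodule.Quotient.mk_eq_zero L).2 hsv
  have hV : IsWeaklyLaskerian R (T ⧸ LinearMap.range m) := WL_of_sub L hLWL hQ
  intro j
  obtain _ | j := j
  · exact h0
  obtain ⟨δ, e2, e3, e1⟩ := ex_les 𝔞 _ _ injK surR exK
  obtain ⟨δ', e2', e3', e1'⟩ := ex_les 𝔞 _ _ injR surV exR
  have hcomp : ∀ e : EX 𝔞 T (j+1),
      exm 𝔞 (LinearMap.range m).subtype (j+1) (exm 𝔞 m.rangeRestrict (j+1) e) = 0 := by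
    intro e
    rw [← exm_comp]
    exact exm_smul 𝔞 hx (j+1) e
  have himg : IsWeaklyLaskerian R (LinearMap.range (δ' j)) :=
    WL_of_surj (δ' j).rangeRestrict (δ' j).surjective_rangeRestrict (WL_EX 𝔞 hV j)
  refine WL_of_exact (exm 𝔞 (LinearMap.ker m).subtype (j+1))
    ((exm 𝔞 m.rangeRestrict (j+1)).codRestrict (LinearMap.range (δ' j))
      fun e => (e1' j _).1 (hcomp e)) ?_ (KK (j+1)) himg
  intro e he
  exact e2 (j+1) e (congrArg Subtype.val he)

theorem core [IsNoetherianRing R] {𝔞 : Ideal R} (hdim : ringKrullDim (R ⧸ 𝔞) = 1)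
    (T : Type u) [AddCommGroup T] [Module R T] (htor : torSub 𝔞 T = ⊤)
    (h0 : IsWeaklyLaskerian R (EX 𝔞 T 0)) (h1 : IsWeaklyLaskerian R (EX 𝔞 T 1)) (j : ℕ) :
    IsWeaklyLaskerian R (EX 𝔞 T j) :=
  core_aux hdim _ T rfl htor h0 h1 j

end CoreThm

section ComplexStep
variable {R}

lemma WL_dom {A C E : Type u} [AddCommGroup A] [Module R A] [AddCommGroup C] [Module R C]
    [AddCommGroup E] [Module R E] (f : A →ₗ[R] C) (hf : Function.Surjective f) (g : A →ₗ[R] E)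
    (hk : ∀ a, g a = 0 → f a = 0) (hE : IsWeaklyLaskerian R E) : IsWeaklyLaskerian R C := by
  have h1 : IsWeaklyLaskerian R (LinearMap.range g) :=
    WL_of_inj (LinearMap.range g).subtype (Submodule.injective_subtype _) hE
  have h2 : IsWeaklyLaskerian R (A ⧸ LinearMap.ker g) := WL_equiv g.quotKerEquivRange.symm h1
  refine WL_of_surj ((LinearMap.ker g).liftQ f fun a ha => hk a ha) ?_ h2
  intro c
  obtain ⟨a, rfl⟩ := hf c
  exact ⟨Submodule.Quotient.mk a, rfl⟩

/-- `EX 𝔞 B 0` as the elements of `B` killed by `𝔞`. -/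
noncomputable def ex0Sub (𝔞 : Ideal R) {J : Type u} [AddCommGroup J] [Module R J]
    (B : Submodule R J) : EX 𝔞 B 0 →ₗ[R] ↥(B ⊓ annSub 𝔞 J) :=
  (B.subtype ∘ₗ ex0 𝔞).codRestrict (B ⊓ annSub 𝔞 J) fun e =>
    ⟨(ex0 𝔞 e).2, fun a ha => congrArg Subtype.val (ex0_mem 𝔞 e a ha)⟩

lemma ex0Sub_coe (𝔞 : Ideal R) {J : Type u} [AddCommGroup J] [Module R J]
    (B : Submodule R J) (e : EX 𝔞 B 0) : (ex0Sub 𝔞 B e).1 = (ex0 𝔞 e).1 := rfl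

lemma ex0Sub_surj (𝔞 : Ideal R) {J : Type u} [AddCommGroup J] [Module R J]
    (B : Submodule R J) : Function.Surjective (ex0Sub 𝔞 B) := by
  rintro ⟨b, hb, hb'⟩
  obtain ⟨e, he⟩ := ex0_exists 𝔞 (⟨b, hb⟩ : B) (fun a ha => Subtype.ext (hb' a ha))
  exact ⟨e, Subtype.ext ((ex0Sub_coe 𝔞 B e).trans (congrArg Subtype.val he))⟩

/-- The induction hypothesis on boundaries. -/
def PB (𝔞 : Ideal R) {J : Type u} [AddCommGroup J] [Module R J] (B D : Submodule R J) : Prop :=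
  (∀ j, IsWeaklyLaskerian R (EX 𝔞 B (j+1))) ∧
    IsWeaklyLaskerian R (↥(B ⊓ annSub 𝔞 J) ⧸ D.comap (B ⊓ annSub 𝔞 J).subtype)

theorem complex_step [IsNoetherianRing R] {𝔞 : Ideal R} (hdim : ringKrullDim (R ⧸ 𝔞) = 1)
    {J J' : Type u} [AddCommGroup J] [Module R J] [AddCommGroup J'] [Module R J']
    [Module.Injective R J] (htor : torSub 𝔞 J = ⊤) (d : J →ₗ[R] J')
    (B D : Submodule R J) (hBZ : B ≤ LinearMap.ker d) (hDB : D ≤ B)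
    (Z' : Submodule R J') (hZ' : LinearMap.range d ≤ Z')
    {H X X' : Type u} [AddCommGroup H] [Module R H] [AddCommGroup X] [Module R X]
    [AddCommGroup X'] [Module R X']
    (h : LinearMap.ker d →ₗ[R] H) (hs : Function.Surjective h) (hk : ∀ z, h z = 0 ↔ z.1 ∈ B)
    (π : ↥(LinearMap.ker d ⊓ annSub 𝔞 J) →ₗ[R] X) (πs : Function.Surjective π)
    (πk : ∀ z, π z = 0 ↔ z.1 ∈ D)
    (π' : ↥(Z' ⊓ annSub 𝔞 J') →ₗ[R] X')
    (πk' : ∀ z, π' z = 0 ↔ z.1 ∈ (annSub 𝔞 J).map d)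
    (hyp : Subsingleton H ∨ (IsWeaklyLaskerian R X ∧ IsWeaklyLaskerian R X'))
    (hP : PB 𝔞 B D) :
    (∀ j, IsWeaklyLaskerian R (EX 𝔞 H j)) ∧ IsWeaklyLaskerian R X ∧
      PB 𝔞 (LinearMap.range d) ((annSub 𝔞 J).map d) := by
  obtain ⟨P1, P2⟩ := hP
  have exZ : Function.Exact (LinearMap.ker d).subtype d.rangeRestrict := by
    intro t
    refine ⟨fun h => ⟨⟨t, ?_⟩, rfl⟩, ?_⟩
    · exact congrArg Subtype.val h
    · rintro ⟨y, rfl⟩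
      exact Subtype.ext y.2
  have injZ : Function.Injective (LinearMap.ker d).subtype := Submodule.injective_subtype _
  have surZ : Function.Surjective d.rangeRestrict := d.surjective_rangeRestrict
  have injB : Function.Injective (Submodule.inclusion hBZ) := Submodule.inclusion_injective hBZ
  have exB : Function.Exact (Submodule.inclusion hBZ) h := by
    intro z
    rw [hk z]
    refine ⟨fun hz => ⟨⟨z.1, hz⟩, rfl⟩, ?_⟩
    rintro ⟨y, rfl⟩
    exact y.2
  obtain ⟨δ, e2, e3, e1⟩ := ex_les 𝔞 _ _ injZ surZ exZ
  have subJ : ∀ j, Subsingleton (EX 𝔞 J (j+1)) := fun j => ex_subsingleton 𝔞 J j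
  have δsurj : Function.Surjective (δ 0) := fun e =>
    (e1 0 e).1 ((subJ 0).elim _ _)
  have δker : ∀ e, δ 0 e = 0 ↔ (ex0Sub 𝔞 (LinearMap.range d) e).1 ∈ (annSub 𝔞 J).map d := by
    intro e
    rw [e3 0 e]
    constructor
    · rintro ⟨e', rfl⟩
      refine ⟨ex0 𝔞 e', ex0_mem 𝔞 e', ?_⟩
      rw [ex0Sub_coe, ex0_exm]
      rfl
    · rintro ⟨y, hy, hye⟩
      obtain ⟨e', rfl⟩ := ex0_exists 𝔞 y hy
      refine ⟨e', ex0_injective 𝔞 (Subtype.ext ?_)⟩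
      rw [ex0_exm]
      exact hye
  set C' := ↥(LinearMap.range d ⊓ annSub 𝔞 J') ⧸
    ((annSub 𝔞 J).map d).comap (LinearMap.range d ⊓ annSub 𝔞 J').subtype with hC'
  let q : EX 𝔞 (LinearMap.range d) 0 →ₗ[R] C' :=
    (Submodule.mkQ _) ∘ₗ ex0Sub 𝔞 (LinearMap.range d)
  have qs : Function.Surjective q :=
    (Submodule.mkQ_surjective _).comp (ex0Sub_surj 𝔞 (LinearMap.range d))
  have qk : ∀ e, q e = 0 ↔ δ 0 e = 0 := by
    intro e
    rw [δker e]
    exact Submodule.Quotient.mk_eq_zero _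
  have key : (∀ j, IsWeaklyLaskerian R (EX 𝔞 H j)) ∧ IsWeaklyLaskerian R X := by
    rcases hyp with hsub | ⟨hX, hX'⟩
    · have hH : IsWeaklyLaskerian R H := WL_of_subsingleton
      refine ⟨fun j => WL_EX 𝔞 hH j, ?_⟩
      refine WL_dom (π ∘ₗ Submodule.inclusion (inf_le_inf_right _ hBZ)) ?_
        (Submodule.mkQ (D.comap (B ⊓ annSub 𝔞 J).subtype)) ?_ P2
      · intro x
        obtain ⟨y, rfl⟩ := πs x
        refine ⟨⟨y.1, (hk ⟨y.1, y.2.1⟩).1 (hsub.elim _ _), y.2.2⟩, rfl⟩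
      · intro a ha
        have ha' : a ∈ D.comap (B ⊓ annSub 𝔞 J).subtype := (Submodule.Quotient.mk_eq_zero _).1 ha
        exact (πk _).2 ha'
    · refine ⟨?_, hX⟩
      have hC : IsWeaklyLaskerian R C' := by
        refine WL_dom (Submodule.mkQ _) (Submodule.mkQ_surjective _)
          (π' ∘ₗ Submodule.inclusion (inf_le_inf_right _ hZ')) ?_ hX'
        intro a ha
        exact (Submodule.Quotient.mk_eq_zero _).2 ((πk' _).1 ha)
      have Z1 : IsWeaklyLaskerian R (EX 𝔞 (LinearMap.ker d) 1) :=
        WL_dom (δ 0) δsurj q (fun a ha => (qk a).1 ha) hC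
      obtain ⟨ε, f2, f3, f1⟩ := ex_les 𝔞 _ _ injB hs exB
      have H0 : IsWeaklyLaskerian R (EX 𝔞 H 0) := by
        have hr : IsWeaklyLaskerian R (LinearMap.range (exm 𝔞 h 0)) := by
          refine WL_dom (exm 𝔞 h 0).rangeRestrict (LinearMap.surjective_rangeRestrict _)
            (π ∘ₗ ex0Sub 𝔞 (LinearMap.ker d)) ?_ hX
          intro e he
          refine Subtype.ext (ex0_injective 𝔞 ?_)
          have h1 : (ex0Sub 𝔞 (LinearMap.ker d) e).1 ∈ D := (πk _).1 he
          have h2 : h (ex0 𝔞 e) = 0 := (hk _).2 (hDB h1)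
          exact (ex0_exm 𝔞 h e).trans (h2.trans (map_zero _).symm)
        refine WL_of_exact (LinearMap.range (exm 𝔞 h 0)).subtype (ε 0) ?_ hr (P1 0)
        intro e he
        obtain ⟨e', he'⟩ := (f3 0 e).1 he
        exact ⟨⟨e, e', he'⟩, rfl⟩
      have H1 : IsWeaklyLaskerian R (EX 𝔞 H 1) := WL_EX3 𝔞 _ _ injB hs exB 1 Z1 (P1 1)
      exact core hdim H (tor_of_surj h hs (tor_of_inj _ injZ htor)) H0 H1
  have hZ : ∀ j, IsWeaklyLaskerian R (EX 𝔞 (LinearMap.ker d) (j+1)) := fun j =>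
    WL_EX2 𝔞 _ _ injB hs exB (j+1) (P1 j) (key.1 (j+1))
  refine ⟨key.1, key.2, fun j => ?_, ?_⟩
  · have := subJ j
    exact WL_EX3 𝔞 _ _ injZ surZ exZ (j+1) WL_of_subsingleton (hZ (j+1))
  · exact WL_dom q qs (δ 0) (fun a ha => (qk a).2 ha) (hZ 0)

lemma PB_bot [IsNoetherianRing R] (𝔞 : Ideal R) (J : Type u) [AddCommGroup J] [Module R J] :
    PB 𝔞 (⊥ : Submodule R J) ⊥ := by
  refine ⟨fun j => WL_EX 𝔞 WL_of_subsingleton _, ?_⟩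
  have : Subsingleton ↥((⊥ : Submodule R J) ⊓ annSub 𝔞 J) := by
    rw [bot_inf_eq]
    infer_instance
  exact WL_of_surj (Submodule.mkQ _) (Submodule.mkQ_surjective _) WL_of_subsingleton

end ComplexStep

section Final
open CategoryTheory
variable {R}
variable {M : ModuleCat.{u} R} (I : InjectiveResolution M) (𝔞 : Ideal R)

/-- The torsion part of an injective resolution. -/
abbrev TJ (i : ℕ) : Type u := ↥(torSub 𝔞 (I.cocomplex.X i))

/-- Its differential. -/
noncomputable def tD (i : ℕ) : TJ I 𝔞 i →ₗ[R] TJ I 𝔞 (i+1) :=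
  (dI I i ∘ₗ (torSub 𝔞 (I.cocomplex.X i)).subtype).codRestrict _ fun y => by
    obtain ⟨t, ht⟩ := mem_torSub.1 y.2
    refine ⟨t, fun r hr => ?_⟩
    exact ((map_smul (dI I i) r y.1).symm.trans (congrArg _ (ht r hr))).trans (map_zero _)

lemma tD_coe (i : ℕ) (y : TJ I 𝔞 i) : (tD I 𝔞 i y).1 = dI I i y.1 := rfl

lemma tD_tD (i : ℕ) (y : TJ I 𝔞 i) : tD I 𝔞 (i+1) (tD I 𝔞 i y) = 0 :=
  Subtype.ext (dI_dI I i y.1)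

lemma TJ_tor (i : ℕ) : torSub 𝔞 (TJ I 𝔞 i) = ⊤ := by
  rw [eq_top_iff]
  intro y _
  obtain ⟨t, ht⟩ := mem_torSub.1 y.2
  exact ⟨t, fun r hr => Subtype.ext (ht r hr)⟩

lemma ann_le_tor (i : ℕ) {y : I.cocomplex.X i} (hy : y ∈ annSub 𝔞 (I.cocomplex.X i)) :
    y ∈ torSub 𝔞 (I.cocomplex.X i) :=
  ⟨1, by rwa [pow_one]⟩

lemma TJ_inj [IsNoetherianRing R] (i : ℕ) : Module.Injective R (TJ I 𝔞 i) := by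
  have h1 : Injective (I.cocomplex.X i) := I.injective i
  have : Module.Injective R (I.cocomplex.X i) :=
    Module.injective_module_of_injective_object R (I.cocomplex.X i)
  exact torSub_injective 𝔞 _

/-- Cocycles of the torsion complex to local cohomology. -/
noncomputable def tH (i : ℕ) : LinearMap.ker (tD I 𝔞 i) →ₗ[R] (localCohomology 𝔞 i).obj M :=
  lcPi I 𝔞 i ∘ₗ ((torSub 𝔞 (I.cocomplex.X i)).subtype ∘ₗ
    (LinearMap.ker (tD I 𝔞 i)).subtype).codRestrict
      (LinearMap.ker (dI I i) ⊓ torSub 𝔞 (I.cocomplex.X i))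
      fun y => ⟨congrArg Subtype.val (LinearMap.mem_ker.1 y.2), y.1.2⟩

/-- Cocycles killed by the ideal to Ext. -/
noncomputable def tX (i : ℕ) : ↥(LinearMap.ker (tD I 𝔞 i) ⊓ annSub 𝔞 (TJ I 𝔞 i)) →ₗ[R]
    Abelian.Ext.{u} (ModuleCat.of R (R ⧸ 𝔞)) M i :=
  xiM I 𝔞 i ∘ₗ ((torSub 𝔞 (I.cocomplex.X i)).subtype ∘ₗ
    (LinearMap.ker (tD I 𝔞 i) ⊓ annSub 𝔞 (TJ I 𝔞 i)).subtype).codRestrict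
      (LinearMap.ker (dI I i) ⊓ annSub 𝔞 (I.cocomplex.X i))
      fun y => ⟨congrArg Subtype.val (LinearMap.mem_ker.1 y.2.1),
        fun a ha => congrArg Subtype.val (y.2.2 a ha)⟩

lemma tH_surj (i : ℕ) : Function.Surjective (tH I 𝔞 i) := by
  intro z
  obtain ⟨y, rfl⟩ := lcPi_surjective I 𝔞 i z
  exact ⟨⟨⟨y.1, y.2.2⟩, Subtype.ext y.2.1⟩, rfl⟩

lemma tX_surj (i : ℕ) : Function.Surjective (tX I 𝔞 i) := by
  intro z
  obtain ⟨y, rfl⟩ := xiM_surjective I 𝔞 i z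
  exact ⟨⟨⟨y.1, ann_le_tor I 𝔞 i y.2.2⟩, Subtype.ext y.2.1,
    fun a ha => Subtype.ext (y.2.2 a ha)⟩, rfl⟩

/-- Boundaries. -/
noncomputable def tB : ∀ i : ℕ, Submodule R (TJ I 𝔞 i)
  | 0 => ⊥
  | i+1 => LinearMap.range (tD I 𝔞 i)

/-- Boundaries of elements killed by the ideal. -/
noncomputable def tE : ∀ i : ℕ, Submodule R (TJ I 𝔞 i)
  | 0 => ⊥
  | i+1 => (annSub 𝔞 (TJ I 𝔞 i)).map (tD I 𝔞 i)

lemma tH_zero (i : ℕ) (z) : tH I 𝔞 i z = 0 ↔ z.1 ∈ tB I 𝔞 i := by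
  cases i with
  | zero =>
    refine (lcPi_zero0 I 𝔞 _).trans ?_
    change z.1.1 = 0 ↔ z.1 ∈ (⊥ : Submodule R (TJ I 𝔞 0))
    rw [Submodule.mem_bot]
    exact ⟨fun h => Subtype.ext h, fun h => congrArg Subtype.val h⟩
  | succ i =>
    refine (lcPi_zero I 𝔞 i _).trans ?_
    constructor
    · rintro ⟨w, hw, h⟩
      exact ⟨⟨w, hw⟩, Subtype.ext h⟩
    · rintro ⟨w, h⟩
      exact ⟨w.1, w.2, congrArg Subtype.val h⟩

lemma tX_zero (i : ℕ) (z) : tX I 𝔞 i z = 0 ↔ z.1 ∈ tE I 𝔞 i := by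
  cases i with
  | zero =>
    refine (xiM_zero_iff0 I 𝔞 _).trans ?_
    change z.1.1 = 0 ↔ z.1 ∈ (⊥ : Submodule R (TJ I 𝔞 0))
    rw [Submodule.mem_bot]
    exact ⟨fun h => Subtype.ext h, fun h => congrArg Subtype.val h⟩
  | succ i =>
    refine (xiM_zero_iff I 𝔞 i _).trans ?_
    constructor
    · rintro ⟨w, hw, h⟩
      exact ⟨⟨w, ann_le_tor I 𝔞 i hw⟩, fun a ha => Subtype.ext (hw a ha), Subtype.ext h⟩
    · rintro ⟨w, hw, h⟩
      exact ⟨w.1, fun a ha => congrArg Subtype.val (hw a ha), congrArg Subtype.val h⟩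

lemma tB_le (i : ℕ) : tB I 𝔞 i ≤ LinearMap.ker (tD I 𝔞 i) := by
  cases i with
  | zero => exact bot_le
  | succ i =>
    rintro _ ⟨w, rfl⟩
    exact tD_tD I 𝔞 i w

lemma tE_le (i : ℕ) : tE I 𝔞 i ≤ tB I 𝔞 i := by
  cases i with
  | zero => exact bot_le
  | succ i =>
    rintro _ ⟨w, -, rfl⟩
    exact ⟨w, rfl⟩

theorem final_aux [IsNoetherianRing R] (hdim : ringKrullDim (R ⧸ 𝔞) = 1)
    (hyp : ∀ i, Subsingleton ((localCohomology 𝔞 i).obj M) ∨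
      (IsWeaklyLaskerian R (Abelian.Ext.{u} (ModuleCat.of R (R ⧸ 𝔞)) M i) ∧
       IsWeaklyLaskerian R (Abelian.Ext.{u} (ModuleCat.of R (R ⧸ 𝔞)) M (i+1)))) (i : ℕ) :
    ((∀ j, IsWeaklyLaskerian R (EX 𝔞 ((localCohomology 𝔞 i).obj M) j)) ∧
      IsWeaklyLaskerian R (Abelian.Ext.{u} (ModuleCat.of R (R ⧸ 𝔞)) M i)) := by
  obtain ⟨I⟩ : Nonempty (InjectiveResolution M) := ⟨injectiveResolution M⟩
  have step : ∀ i, PB 𝔞 (tB I 𝔞 i) (tE I 𝔞 i) →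
      (∀ j, IsWeaklyLaskerian R (EX 𝔞 ((localCohomology 𝔞 i).obj M) j)) ∧
      IsWeaklyLaskerian R (Abelian.Ext.{u} (ModuleCat.of R (R ⧸ 𝔞)) M i) ∧
      PB 𝔞 (tB I 𝔞 (i+1)) (tE I 𝔞 (i+1)) := by
    intro i hP
    have := TJ_inj I 𝔞 i
    exact complex_step hdim (TJ_tor I 𝔞 i) (tD I 𝔞 i) (tB I 𝔞 i) (tE I 𝔞 i) (tB_le I 𝔞 i)
      (tE_le I 𝔞 i) (LinearMap.ker (tD I 𝔞 (i+1))) (tB_le I 𝔞 (i+1)) (tH I 𝔞 i) (tH_surj I 𝔞 i)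
      (tH_zero I 𝔞 i) (tX I 𝔞 i) (tX_surj I 𝔞 i) (tX_zero I 𝔞 i) (tX I 𝔞 (i+1))
      (tX_zero I 𝔞 (i+1)) (hyp i) hP
  have hPB : ∀ i, PB 𝔞 (tB I 𝔞 i) (tE I 𝔞 i) := by
    intro i
    induction i with
    | zero => exact PB_bot 𝔞 _
    | succ i ih => exact (step i ih).2.2
  exact ⟨(step i (hPB i)).1, (step i (hPB i)).2.1⟩

lemma supp_of_tor {Q : Type u} [AddCommGroup Q] [Module R Q] (htor : torSub 𝔞 Q = ⊤) :
    Module.support R Q ⊆ PrimeSpectrum.zeroLocus (𝔞 : Set R) := by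
  intro p hp
  obtain ⟨w, hw⟩ := Module.mem_support_iff_exists_annihilator.1 hp
  obtain ⟨t, ht⟩ := mem_torSub.1 (htor ▸ Submodule.mem_top : w ∈ torSub 𝔞 Q)
  have hle : 𝔞 ^ t ≤ p.asIdeal := fun r hr =>
    hw ((Submodule.mem_annihilator_span_singleton w r).2 (ht r hr))
  exact p.2.le_of_pow_le hle

lemma lc_tor (M : ModuleCat.{u} R) (i : ℕ) :
    torSub 𝔞 ((localCohomology 𝔞 i).obj M) = ⊤ := by
  obtain ⟨I⟩ : Nonempty (InjectiveResolution M) := ⟨injectiveResolution M⟩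
  exact tor_of_surj (tH I 𝔞 i) (tH_surj I 𝔞 i)
    (tor_of_inj (LinearMap.ker (tD I 𝔞 i)).subtype (Submodule.injective_subtype _)
      (TJ_tor I 𝔞 i))

end Final


theorem stmt13 [IsNoetherianRing R] (𝔞 : Ideal R) (M : ModuleCat.{u} R)
    (hdim : ringKrullDim (R ⧸ 𝔞) = 1)
    (h : ∀ i : ℕ, (i : ℕ∞) ≤ cohomologicalDim R 𝔞 M + 1 →
      IsWeaklyLaskerian R (extModule R i (ModuleCat.of R (R ⧸ 𝔞)) M)) :
    (∀ i : ℕ, IsWeaklyCofinite R 𝔞 ((localCohomology 𝔞 i).obj M)) ∧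
      ∀ i : ℕ, IsWeaklyLaskerian R (extModule R i (ModuleCat.of R (R ⧸ 𝔞)) M) := by
  have hyp : ∀ i, Subsingleton ((localCohomology 𝔞 i).obj M) ∨
      (IsWeaklyLaskerian R (Abelian.Ext.{u} (ModuleCat.of R (R ⧸ 𝔞)) M i) ∧
       IsWeaklyLaskerian R (Abelian.Ext.{u} (ModuleCat.of R (R ⧸ 𝔞)) M (i+1))) := by
    intro i
    rcases subsingleton_or_nontrivial ((localCohomology 𝔞 i).obj M) with hs | hn
    · exact Or.inl hs
    · have hi : (i : ℕ∞) ≤ cohomologicalDim R 𝔞 M :=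
        le_iSup₂ (f := fun (k : ℕ) (_ : k ∈ {i : ℕ | Nontrivial ((localCohomology 𝔞 i).obj M)}) =>
          (k : ℕ∞)) i hn
      refine Or.inr ⟨WL_equiv (extCmp i _ M) (h i (hi.trans le_self_add)),
        WL_equiv (extCmp (i+1) _ M) (h (i+1) ?_)⟩
      push_cast
      gcongr
  have key := final_aux 𝔞 hdim hyp
  refine ⟨fun i => ⟨supp_of_tor 𝔞 (lc_tor 𝔞 M i), fun j => ?_⟩, fun i => ?_⟩
  · exact WL_equiv (extCmp j _ ((localCohomology 𝔞 i).obj M)).symm ((key i).1 j)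
  · exact WL_equiv (extCmp i _ M).symm (key i).2
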